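/- arXiv:1504.06783 — 2 statements merged into one kernel-verified Lean document; each statement's English description precedes it below -/
import Mathlib

section
/- Let R be a Noetherian local ring and M a nonzero finitely generated R-module. The idealization A = R ⋉ M is a sequentially Cohen-Macaulay local ring if and only if R is a sequentially Cohen-Macaulay local ring and M is a sequentially Cohen-Macaulay R-module. -/
open IsLocalRing

/-- The (Krull) dimension of a module: `dim_R M = dim (R / ann_R M)`;
the zero module has dimension `⊥` (i.e. `-∞`). -/
noncomputable def moduleDim (R : Type*) [CommRing R] (M : Type*) [AddCommGroup M]
    [Module R M] : WithBot ℕ∞ :=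
  ringKrullDim (R ⧸ Module.annihilator R M)

/-- `dimLe d n` means `d ≤ n` where `n : ℤ` and `d` is a dimension in `WithBot ℕ∞`
(so for `n < 0` this means `d = ⊥`, i.e. the module is zero). -/
def dimLe (d : WithBot ℕ∞) (n : ℤ) : Prop :=
  if 0 ≤ n then d ≤ ((n.toNat : ℕ∞) : WithBot ℕ∞) else d = ⊥

/-- The depth of a module over a Noetherian local ring: the supremum of lengths of
regular sequences on `M` contained in the maximal ideal. -/
noncomputable def moduleDepth (R : Type*) [CommRing R] [IsLocalRing R] (M : Type*)
    [AddCommGroup M] [Module R M] : ℕ∞ :=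
  sSup {n : ℕ∞ | ∃ rs : List R, (rs.length : ℕ∞) = n ∧
    (∀ r ∈ rs, r ∈ maximalIdeal R) ∧ RingTheory.Sequence.IsRegular M rs}

/-- A module over a Noetherian local ring is Cohen-Macaulay if it is zero or
`depth M = dim M`. -/
def IsCMModule (R : Type*) [CommRing R] [IsLocalRing R] (M : Type*) [AddCommGroup M]
    [Module R M] : Prop :=
  Nontrivial M → (moduleDepth R M : WithBot ℕ∞) = moduleDim R M

/-- A module over a (not necessarily local) commutative ring is Cohen-Macaulay if all its
localizations at primes are Cohen-Macaulay. -/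
def IsCMModuleGen (R : Type*) [CommRing R] (M : Type*) [AddCommGroup M] [Module R M] : Prop :=
  ∀ (P : Ideal R) [P.IsPrime],
    IsCMModule (Localization.AtPrime P) (LocalizedModule P.primeCompl M)

/-- `D : Fin (ℓ+1) → Submodule R M` is the dimension filtration of `M`:
`D 0 = 0`, `D ℓ = M`, the chain is strictly increasing, each `D i` (for `i ≥ 1`) is the
largest submodule of its dimension, and every nonzero submodule which is largest among
submodules of dimension at most its own dimension occurs in the chain. -/
def IsDimFiltration (R : Type*) [CommRing R] (M : Type*) [AddCommGroup M] [Module R M]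
    (ℓ : ℕ) (D : Fin (ℓ + 1) → Submodule R M) : Prop :=
  D 0 = ⊥ ∧ D (Fin.last ℓ) = ⊤ ∧ StrictMono D ∧
  (∀ i : Fin ℓ, IsGreatest
    {N : Submodule R M | moduleDim R ↥N ≤ moduleDim R ↥(D i.succ)} (D i.succ)) ∧
  (∀ N : Submodule R M, N ≠ ⊥ →
    IsGreatest {N' : Submodule R M | moduleDim R ↥N' ≤ moduleDim R ↥N} N → ∃ i, D i = N)

/-- A module over a local ring is sequentially Cohen-Macaulay if the consecutive quotients
of its dimension filtration are Cohen-Macaulay. -/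
def IsSeqCM (R : Type*) [CommRing R] [IsLocalRing R] (M : Type*) [AddCommGroup M]
    [Module R M] : Prop :=
  ∃ (ℓ : ℕ) (D : Fin (ℓ + 1) → Submodule R M), IsDimFiltration R M ℓ D ∧
    ∀ i : Fin ℓ, IsCMModule R
      (↥(D i.succ) ⧸ (D i.castSucc).comap (D i.succ).subtype)

/-- Sequentially Cohen-Macaulay over a not necessarily local ring. -/
def IsSeqCMGen (R : Type*) [CommRing R] (M : Type*) [AddCommGroup M] [Module R M] : Prop :=
  ∃ (ℓ : ℕ) (D : Fin (ℓ + 1) → Submodule R M), IsDimFiltration R M ℓ D ∧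
    ∀ i : Fin ℓ, IsCMModuleGen R
      (↥(D i.succ) ⧸ (D i.castSucc).comap (D i.succ).subtype)

/-- A local ring is sequentially Cohen-Macaulay if it is so as a module over itself. -/
def IsSeqCMRing (R : Type*) [CommRing R] [IsLocalRing R] : Prop := IsSeqCM R R

/-!
Let `M_{<n}` be the largest submodule of `M` of dimension less than `n`. Its elements are those
whose annihilator lies only in primes `p` with `dim (R / p) < n`. The distinct `M_{<n}` form the
dimension filtration, and the nonzero subquotients `M_{<n+1} / M_{<n}` have dimension exactly `n`,
so `M` is sequentially Cohen-Macaulay if and only if each of them has depth at least `n`, the zero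
module having infinite depth.

In this form the property commutes with products, because `M ↦ M_{<n}` does and the depth of a
product is the minimum of the depths. It can also be tested after restriction of scalars along a
module-finite local extension `R → A`: integrality preserves the dimensions of quotients by primes
and makes `m_A` the radical of `m_R A`, so that neither `N_{<n}` nor the depth changes. The
idealization is module-finite over `R`, and equals `R × M` as an `R`-module.
-/

section Prod

variable {R M N : Type*} [CommRing R] [AddCommGroup M] [Module R M] [AddCommGroup N] [Module R N]

lemma isSMulRegular_prod_iff {x : R} :
    IsSMulRegular (M × N) x ↔ IsSMulRegular M x ∧ IsSMulRegular N x :=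
  ⟨fun h ↦ ⟨h.of_injective (LinearMap.inl R M N) LinearMap.inl_injective,
    h.of_injective (LinearMap.inr R M N) LinearMap.inr_injective⟩, fun h ↦ h.1.prodMap h.2⟩

open Pointwise in
lemma smul_top_prod (x : R) : x • (⊤ : Submodule R (M × N)) =
    (x • (⊤ : Submodule R M)).prod (x • (⊤ : Submodule R N)) := by
  ext ⟨a, b⟩
  simp [Submodule.mem_smul_pointwise_iff_exists]

/-- The isomorphism `(M × N) / (P × Q) ≃ M / P × N / Q`. -/
noncomputable def quotientProdEquiv (P : Submodule R M) (Q : Submodule R N) :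
    ((M × N) ⧸ P.prod Q) ≃ₗ[R] (M ⧸ P) × (N ⧸ Q) :=
  (Submodule.quotEquivOfEq _ _ (by simp [LinearMap.ker_prodMap])).trans
    ((P.mkQ.prodMap Q.mkQ).quotKerEquivOfSurjective
      (P.mkQ_surjective.prodMap Q.mkQ_surjective))

end Prod

section Depth

open RingTheory.Sequence CategoryTheory

universe u v

/-- `DepthGE R M n` says that the depth of `M` is at least `n`, where the zero module has infinite
depth: this is why the regular sequence is only required to be weakly regular. -/
def DepthGE (R : Type*) [CommRing R] [IsLocalRing R] (M : Type*) [AddCommGroup M] [Module R M]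
    (n : ℕ) : Prop :=
  ∃ rs : List R, rs.length = n ∧ (∀ r ∈ rs, r ∈ maximalIdeal R) ∧ IsWeaklyRegular M rs

variable {R : Type u} [CommRing R] [IsLocalRing R]

lemma depthGE_zero (M : Type*) [AddCommGroup M] [Module R M] : DepthGE R M 0 :=
  ⟨[], rfl, by simp, .nil R M⟩

lemma depthGE_congr {M N : Type*} [AddCommGroup M] [Module R M] [AddCommGroup N] [Module R N]
    (e : M ≃ₗ[R] N) (n : ℕ) : DepthGE R M n ↔ DepthGE R N n := by
  simp only [DepthGE, e.isWeaklyRegular_congr]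

lemma depthGE_succ_iff_exists {M : Type*} [AddCommGroup M] [Module R M] {n : ℕ} :
    DepthGE R M (n + 1) ↔
      ∃ x ∈ maximalIdeal R, IsSMulRegular M x ∧ DepthGE R (QuotSMulTop x M) n := by
  constructor
  · rintro ⟨_ | ⟨x, rs⟩, hlen, hmem, hreg⟩
    · cases hlen
    · rw [List.forall_mem_cons] at hmem
      rw [isWeaklyRegular_cons_iff] at hreg
      exact ⟨x, hmem.1, hreg.1, rs, Nat.succ_injective hlen, hmem.2, hreg.2⟩
  · rintro ⟨x, hx, hxreg, rs, hlen, hmem, hreg⟩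
    exact ⟨x :: rs, congrArg (· + 1) hlen, List.forall_mem_cons.mpr ⟨hx, hmem⟩,
      .cons hxreg hreg⟩

lemma depthGE_of_subsingleton (M : Type*) [AddCommGroup M] [Module R M] [Subsingleton M] (n : ℕ) :
    DepthGE R M n := by
  induction n generalizing M with
  | zero => exact depthGE_zero M
  | succ n ih =>
    have : Subsingleton (QuotSMulTop (0 : R) M) := (Submodule.mkQ_surjective _).subsingleton
    exact depthGE_succ_iff_exists.mpr
      ⟨0, zero_mem _, fun _ _ _ ↦ Subsingleton.elim _ _, ih _⟩

variable [IsNoetherianRing R]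

lemma exists_isSMulRegular_mem_maximalIdeal_iff {M : Type*} [AddCommGroup M] [Module R M]
    [Module.Finite R M] : (∃ x ∈ maximalIdeal R, IsSMulRegular M x) ↔
      ∀ y : M, (∀ r ∈ maximalIdeal R, r • y = 0) → y = 0 := by
  constructor
  · rintro ⟨x, hx, hreg⟩ y hy
    exact hreg.right_eq_zero_of_smul (hy x hx)
  · intro h
    have : Subsingleton (R ⧸ maximalIdeal R →ₗ[R] M) := by
      refine subsingleton_of_forall_eq 0 fun f ↦ Submodule.linearMap_qext _ ?_
      refine LinearMap.ext_ring (h _ fun r hr ↦ ?_)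
      rw [← map_smul, smul_eq_mul, mul_one, LinearMap.comp_apply, Submodule.mkQ_apply,
        (Submodule.Quotient.mk_eq_zero _).mpr hr, map_zero]
    simpa only [Ideal.annihilator_quotient] using IsSMulRegular.subsingleton_linearMap_iff.mp this

open Abelian in
lemma depthGE_iff_forall_subsingleton_ext {M : Type v} [Small.{v} R] [AddCommGroup M] [Module R M]
    [Module.Finite R M] [Nontrivial M] {n : ℕ} :
    DepthGE R M n ↔ ∀ i < n, Subsingleton
      (Ext (ModuleCat.of R (Shrink.{v} (R ⧸ maximalIdeal R))) (ModuleCat.of R M) i) := by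
  have hlt : maximalIdeal R • (⊤ : Submodule R M) < ⊤ :=
    (Submodule.top_ne_ideal_smul_of_le_jacobson_annihilator
      (maximalIdeal_le_jacobson _)).symm.lt_top
  refine Iff.trans ?_
    ((ModuleCat.exists_isRegular_tfae (maximalIdeal R) n (ModuleCat.of R M) hlt).out 3 1 rfl rfl)
  exact ⟨fun ⟨rs, hlen, hmem, hreg⟩ ↦
      ⟨rs, hlen, hmem, .of_isWeaklyRegular_of_mem_maximalIdeal M hmem hreg⟩,
    fun ⟨rs, hlen, hmem, hreg⟩ ↦ ⟨rs, hlen, hmem, hreg.toIsWeaklyRegular⟩⟩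

open Abelian in
lemma depthGE_quotSMulTop_of_small {M : Type v} [Small.{v} R] [AddCommGroup M] [Module R M]
    [Module.Finite R M] [Nontrivial M] {n : ℕ} {x : R} (hx : x ∈ maximalIdeal R)
    (hreg : IsSMulRegular M x) (h : DepthGE R M (n + 1)) : DepthGE R (QuotSMulTop x M) n := by
  have := nontrivial_quotSMulTop_of_mem_maximalIdeal M hx
  rw [depthGE_iff_forall_subsingleton_ext] at h ⊢
  intro i hi
  have hM (j : ℕ) (hj : j < n + 1) := AddCommGrpCat.isZero_of_iff_subsingleton.mpr (h j hj)
  -- `Ext i` of the quotient sits between `Ext i` and `Ext (i + 1)` of `M`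
  exact AddCommGrpCat.subsingleton_of_isZero <| ShortComplex.Exact.isZero_of_both_zeros
    (Ext.covariant_sequence_exact₃' _
      (IsSMulRegular.smulShortComplex_shortExact (M := ModuleCat.of R M) hreg) i (i + 1) rfl)
    ((hM i (by lia)).eq_zero_of_src _) ((hM (i + 1) (by lia)).eq_zero_of_tgt _)

lemma depthGE_succ_iff_of_isSMulRegular {M : Type v} [AddCommGroup M] [Module R M]
    [Module.Finite R M] {n : ℕ} {x : R} (hx : x ∈ maximalIdeal R) (hreg : IsSMulRegular M x) :
    DepthGE R M (n + 1) ↔ DepthGE R (QuotSMulTop x M) n := by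
  refine ⟨fun h ↦ ?_, fun h ↦ depthGE_succ_iff_exists.mpr ⟨x, hx, hreg, h⟩⟩
  rcases subsingleton_or_nontrivial M with _ | _
  · have : Subsingleton (QuotSMulTop x M) := (Submodule.mkQ_surjective _).subsingleton
    exact depthGE_of_subsingleton _ n
  -- `ULift` moves `M` to a universe in which `R` is small
  let e : ULift.{u} M ≃ₗ[R] M := ULift.moduleEquiv
  exact (depthGE_congr (QuotSMulTop.congr x e) n).mp <|
    depthGE_quotSMulTop_of_small hx ((e.isSMulRegular_congr x).mpr hreg)
      ((depthGE_congr e _).mpr h)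

lemma depthGE_prod_iff {M N : Type*} [AddCommGroup M] [Module R M] [AddCommGroup N] [Module R N]
    [Module.Finite R M] [Module.Finite R N] {n : ℕ} :
    DepthGE R (M × N) n ↔ DepthGE R M n ∧ DepthGE R N n := by
  induction n generalizing M N with
  | zero => simp only [depthGE_zero, and_self]
  | succ n ih =>
    have step (x : R) (hx : x ∈ maximalIdeal R) (hreg : IsSMulRegular (M × N) x) :
        DepthGE R (M × N) (n + 1) ↔ DepthGE R M (n + 1) ∧ DepthGE R N (n + 1) := by
      obtain ⟨hM, hN⟩ := isSMulRegular_prod_iff.mp hreg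
      rw [depthGE_succ_iff_of_isSMulRegular hx hreg, depthGE_succ_iff_of_isSMulRegular hx hM,
        depthGE_succ_iff_of_isSMulRegular hx hN, ← ih]
      exact depthGE_congr
        ((Submodule.quotEquivOfEq _ _ (smul_top_prod x)).trans (quotientProdEquiv _ _)) n
    constructor
    · intro h
      obtain ⟨x, hx, hreg, -⟩ := depthGE_succ_iff_exists.mp h
      exact (step x hx hreg).mp h
    · intro h
      obtain ⟨x, hx, hxM, -⟩ := depthGE_succ_iff_exists.mp h.1
      obtain ⟨y, hy, hyN, -⟩ := depthGE_succ_iff_exists.mp h.2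
      have hM := exists_isSMulRegular_mem_maximalIdeal_iff.mp ⟨x, hx, hxM⟩
      have hN := exists_isSMulRegular_mem_maximalIdeal_iff.mp ⟨y, hy, hyN⟩
      obtain ⟨z, hz, hreg⟩ := (exists_isSMulRegular_mem_maximalIdeal_iff (M := M × N)).mpr
        fun m hm ↦ Prod.ext (hM _ fun r hr ↦ congrArg Prod.fst (hm r hr))
          (hN _ fun r hr ↦ congrArg Prod.snd (hm r hr))
      exact (step z hz hreg).mpr h

lemma length_le_moduleDim_of_isRegular {M : Type*} [AddCommGroup M] [Module R M]
    [Module.Finite R M] {rs : List R} (hrs : IsRegular M rs) :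
    (rs.length : WithBot ℕ∞) ≤ moduleDim R M := by
  have := hrs.quot_ofList_smul_nontrivial (⊤ : Submodule R M)
  have hnonneg : 0 ≤ Module.supportDim R (M ⧸ Ideal.ofList rs • (⊤ : Submodule R M)) :=
    Order.krullDim_nonneg_iff.mpr Module.nonempty_support_of_nontrivial.to_subtype
  rw [moduleDim, ← Module.supportDim_eq_ringKrullDim_quotient_annihilator,
    ← Module.supportDim_add_length_eq_supportDim_of_isRegular rs hrs]
  exact le_add_of_nonneg_left hnonneg

lemma moduleDepth_eq_iff_depthGE {M : Type*} [AddCommGroup M] [Module R M] [Module.Finite R M]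
    [Nontrivial M] {n : ℕ} (hn : moduleDim R M = n) : moduleDepth R M = n ↔ DepthGE R M n := by
  constructor
  · intro h
    have : Nonempty {n : ℕ∞ | ∃ rs : List R, (rs.length : ℕ∞) = n ∧
        (∀ r ∈ rs, r ∈ maximalIdeal R) ∧ IsRegular M rs} :=
      ⟨0, [], rfl, by simp, .nil R M⟩
    obtain ⟨rs, hlen, hmem, hreg⟩ :=
      ENat.sSup_mem_of_nonempty_of_lt_top (h.trans_lt (ENat.natCast_lt_top n))
    exact ⟨rs, by exact_mod_cast hlen.trans h, hmem, hreg.toIsWeaklyRegular⟩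
  · rintro ⟨rs, hlen, hmem, hreg⟩
    apply le_antisymm
    · refine sSup_le ?_
      rintro _ ⟨rs', rfl, -, hreg'⟩
      have := hn ▸ length_le_moduleDim_of_isRegular hreg'
      exact_mod_cast this
    · exact le_sSup ⟨rs, by rw [hlen], hmem, .of_isWeaklyRegular_of_mem_maximalIdeal M hmem hreg⟩

lemma isCMModule_iff_depthGE {M : Type*} [AddCommGroup M] [Module R M] [Module.Finite R M] {n : ℕ}
    (hn : Nontrivial M → moduleDim R M = n) : IsCMModule R M ↔ DepthGE R M n := by
  rcases subsingleton_or_nontrivial M with _ | hM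
  · exact iff_of_true (fun h ↦ (not_nontrivial M h).elim) (depthGE_of_subsingleton M n)
  · rw [IsCMModule, hn hM, ← moduleDepth_eq_iff_depthGE (hn hM)]
    exact (forall_prop_of_true hM).trans (by norm_cast)

end Depth

section FiniteExtension

open RingTheory.Sequence

variable {R A : Type*} [CommRing R] [IsLocalRing R] [CommRing A] [IsLocalRing A] [Algebra R A]

lemma comap_maximalIdeal_of_isIntegral [Algebra.IsIntegral R A] :
    (maximalIdeal A).comap (algebraMap R A) = maximalIdeal R :=
  eq_maximalIdeal (Ideal.isMaximal_comap_of_isIntegral_of_isMaximal _)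

lemma maximalIdeal_le_radical_map_of_isIntegral [Algebra.IsIntegral R A] :
    maximalIdeal A ≤ ((maximalIdeal R).map (algebraMap R A)).radical := by
  rw [Ideal.radical_eq_sInf]
  refine le_sInf fun P ⟨hle, hP⟩ ↦ (eq_maximalIdeal ?_).ge
  refine Ideal.isMaximal_of_isIntegral_of_isMaximal_comap (R := R) P ?_
  rw [← (maximalIdeal.isMaximal R).eq_of_le (P.comap_ne_top _ hP.ne_top)
    (Ideal.map_le_iff_le_comap.mp hle)]
  infer_instance

variable [IsNoetherianRing R] [Module.Finite R A] {N : Type*} [AddCommGroup N] [Module A N]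
  [Module R N] [IsScalarTower R A N] [Module.Finite A N]

lemma exists_isSMulRegular_mem_maximalIdeal_of_finite
    (h : ∃ a ∈ maximalIdeal A, IsSMulRegular N a) :
    ∃ r ∈ maximalIdeal R, IsSMulRegular N r := by
  have : Module.Finite R N := .trans A N
  obtain ⟨a, ha, hreg⟩ := h
  refine exists_isSMulRegular_mem_maximalIdeal_iff.mpr fun y hy ↦ ?_
  have hle : (maximalIdeal R).map (algebraMap R A) ≤ Ideal.torsionOf A N y :=
    Ideal.map_le_iff_le_comap.mpr fun r hr ↦ by
      rw [Ideal.mem_comap, Ideal.mem_torsionOf_iff, algebraMap_smul, hy r hr]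
  obtain ⟨k, hk⟩ := maximalIdeal_le_radical_map_of_isIntegral (R := R) ha
  exact (hreg.pow k).right_eq_zero_of_smul (hle hk)

lemma depthGE_iff_of_finite {n : ℕ} : DepthGE A N n ↔ DepthGE R N n := by
  have : IsNoetherianRing A := isNoetherian_of_tower R inferInstance
  have hmem (r : R) : algebraMap R A r ∈ maximalIdeal A ↔ r ∈ maximalIdeal R := by
    rw [← Ideal.mem_comap, comap_maximalIdeal_of_isIntegral]
  constructor
  · intro h
    induction n generalizing N with
    | zero => exact depthGE_zero N
    | succ n ih =>
      obtain ⟨a, ha, hreg, -⟩ := depthGE_succ_iff_exists.mp h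
      obtain ⟨r, hr, hreg⟩ :=
        exists_isSMulRegular_mem_maximalIdeal_of_finite (R := R) ⟨a, ha, hreg⟩
      rw [← isSMulRegular_algebraMap_iff A] at hreg
      rw [depthGE_succ_iff_of_isSMulRegular ((hmem r).mpr hr) hreg] at h
      obtain ⟨rs, hlen, hrs, hregs⟩ := ih h
      refine ⟨r :: rs, congrArg (· + 1) hlen, List.forall_mem_cons.mpr ⟨hr, hrs⟩, ?_⟩
      rw [← isWeaklyRegular_map_algebraMap_iff A] at hregs ⊢
      exact .cons hreg hregs
  · rintro ⟨rs, hlen, hrs, hregs⟩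
    exact ⟨rs.map (algebraMap R A), List.length_map _ |>.trans hlen,
      List.forall_mem_map.mpr fun r hr ↦ (hmem r).mpr (hrs r hr),
      (isWeaklyRegular_map_algebraMap_iff A N rs).mpr hregs⟩

end FiniteExtension

section DimLT

open Order

lemma krullDim_lt_natCast_iff_of_isUpperSet {α : Type*} [Preorder α] {s : Set α} (hs : IsUpperSet s)
    {n : ℕ} : krullDim s < n ↔ ∀ a ∈ s, coheight a < n := by
  have hcoheight (a : ↥s) : coheight a = coheight (a : α) :=
    coheight_eq_of_strictMono Subtype.val (Subtype.strictMono_coe (· ∈ s))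
      (fun a b hab ↦ ⟨⟨b, hs hab.le a.2⟩, hab, rfl⟩) a
  constructor
  · intro h a ha
    have := (coheight_le_krullDim (⟨a, ha⟩ : ↥s)).trans_lt h
    rw [hcoheight] at this
    exact_mod_cast this
  · intro h
    rw [krullDim_lt_coe_iff]
    intro l
    have := length_le_coheight_head.trans_lt (hcoheight l.head ▸ h _ l.head.2)
    exact_mod_cast this

/-- The largest submodule of `M` of dimension less than `n`, encoded as the set of elements that
vanish in every localization at a prime `p` with `dim (R / p) ≥ n`. The submodules in the dimension
filtration of a Noetherian module are the values of `dimLT R M`. -/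
noncomputable def dimLT (R : Type*) [CommRing R] (M : Type*) [AddCommGroup M] [Module R M]
    (n : ℕ) : Submodule R M :=
  ⨅ (p : PrimeSpectrum R) (_ : (n : ℕ∞) ≤ coheight p),
    LinearMap.ker (LocalizedModule.mkLinearMap p.asIdeal.primeCompl M)

/-- The subquotient of dimension `n` (or zero) in the dimension filtration of `M`. -/
abbrev dimQuot (R : Type*) [CommRing R] (M : Type*) [AddCommGroup M] [Module R M] (n : ℕ) :
    Type _ :=
  ↥(dimLT R M (n + 1)) ⧸ (dimLT R M n).comap (dimLT R M (n + 1)).subtype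

variable {R : Type*} [CommRing R] {M : Type*} [AddCommGroup M] [Module R M] {n : ℕ}

lemma mem_dimLT_iff {x : M} : x ∈ dimLT R M n ↔
    ∀ p : PrimeSpectrum R, (n : ℕ∞) ≤ coheight p → ∃ r ∉ p.asIdeal, r • x = 0 := by
  simp only [dimLT, Submodule.mem_iInf, LocalizedModule.mem_ker_mkLinearMap_iff,
    Ideal.mem_primeCompl_iff]

lemma mem_dimLT_iff_torsionOf {x : M} : x ∈ dimLT R M n ↔
    ∀ p : PrimeSpectrum R, Ideal.torsionOf R M x ≤ p.asIdeal → coheight p < n := by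
  rw [mem_dimLT_iff]
  refine forall_congr' fun p ↦ not_imp_not.symm.trans (imp_congr ?_ not_le)
  simp only [SetLike.le_def, Ideal.mem_torsionOf_iff, not_exists, not_and']
  exact forall₂_congr fun _ _ ↦ not_not

lemma dimLT_mono : Monotone (dimLT R M) := fun _ _ hmn _ hx ↦
  mem_dimLT_iff.mpr fun p hp ↦ mem_dimLT_iff.mp hx p (le_trans (by exact_mod_cast hmn) hp)

lemma dimLT_zero : dimLT R M 0 = ⊥ := by
  refine eq_bot_iff.mpr fun x hx ↦ ?_
  by_contra hne
  obtain ⟨m, hm, hle⟩ := (Ideal.torsionOf R M x).exists_le_maximal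
    (mt (Ideal.torsionOf_eq_top_iff R x).mp hne)
  exact not_lt_bot (mem_dimLT_iff_torsionOf.mp hx ⟨m, hm.isPrime⟩ hle)

lemma dimLT_le_comap {N : Type*} [AddCommGroup N] [Module R N] (f : M →ₗ[R] N) (n : ℕ) :
    dimLT R M n ≤ (dimLT R N n).comap f := fun x hx ↦
  mem_dimLT_iff.mpr fun p hp ↦
    let ⟨r, hr, hrx⟩ := mem_dimLT_iff.mp hx p hp
    ⟨r, hr, by rw [← map_smul, hrx, map_zero]⟩

lemma comap_dimLT {N : Type*} [AddCommGroup N] [Module R N] {f : M →ₗ[R] N}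
    (hf : Function.Injective f) (n : ℕ) : (dimLT R N n).comap f = dimLT R M n := by
  ext x
  simp only [Submodule.mem_comap, mem_dimLT_iff, ← map_smul, map_eq_zero_iff f hf]

lemma dimLT_prod {N : Type*} [AddCommGroup N] [Module R N] (n : ℕ) :
    dimLT R (M × N) n = (dimLT R M n).prod (dimLT R N n) := by
  refine le_antisymm (fun x hx ↦ ⟨dimLT_le_comap (LinearMap.fst R M N) n hx,
    dimLT_le_comap (LinearMap.snd R M N) n hx⟩) fun x hx ↦ ?_
  have h₁ : (x.1, 0) ∈ dimLT R (M × N) n := dimLT_le_comap (LinearMap.inl R M N) n hx.1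
  have h₂ : (0, x.2) ∈ dimLT R (M × N) n := dimLT_le_comap (LinearMap.inr R M N) n hx.2
  simpa only [Prod.mk_add_mk, add_zero, zero_add] using add_mem h₁ h₂

lemma dimLT_quotient_dimLT (n : ℕ) : dimLT R (M ⧸ dimLT R M n) n = ⊥ := by
  refine eq_bot_iff.mpr fun q hq ↦ ?_
  obtain ⟨x, rfl⟩ := Submodule.mkQ_surjective _ q
  refine (Submodule.Quotient.mk_eq_zero _).mpr (mem_dimLT_iff.mpr fun p hp ↦ ?_)
  obtain ⟨r, hr, hrx⟩ := mem_dimLT_iff.mp hq p hp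
  rw [← map_smul, Submodule.mkQ_apply, Submodule.Quotient.mk_eq_zero] at hrx
  obtain ⟨s, hs, hsrx⟩ := mem_dimLT_iff.mp hrx p hp
  exact ⟨s * r, p.isPrime.mul_notMem hs hr, by rw [mul_smul, hsrx]⟩

lemma moduleDim_lt_iff [Module.Finite R M] : moduleDim R M < n ↔ dimLT R M n = ⊤ := by
  have hupper : IsUpperSet (Module.support R M) := fun _ _ ↦ Module.mem_support_mono
  rw [moduleDim, ← Module.supportDim_eq_ringKrullDim_quotient_annihilator, Module.supportDim,
    krullDim_lt_natCast_iff_of_isUpperSet hupper]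
  simp only [dimLT, iInf_eq_top, ← LocalizedModule.subsingleton_iff_ker_eq_top,
    ← Module.notMem_support_iff]
  exact forall_congr' fun p ↦ not_imp_not.symm.trans (imp_congr_left not_lt)

lemma moduleDim_submodule_lt_iff {N : Submodule R M} [Module.Finite R N] :
    moduleDim R N < n ↔ N ≤ dimLT R M n := by
  rw [moduleDim_lt_iff, ← comap_dimLT N.subtype_injective, Submodule.comap_subtype_eq_top]

lemma withBot_lt_natCast_add_one_iff {d : WithBot ℕ∞} : d < ((n + 1 : ℕ) : WithBot ℕ∞) ↔ d ≤ n := by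
  rw [Nat.cast_add_one, ENat.WithBot.lt_add_one_iff]

lemma moduleDim_submodule_le_iff {N : Submodule R M} [Module.Finite R N] :
    moduleDim R N ≤ n ↔ N ≤ dimLT R M (n + 1) := by
  rw [← withBot_lt_natCast_add_one_iff, moduleDim_submodule_lt_iff]

lemma moduleDim_le_of_surjective {N : Type*} [AddCommGroup N] [Module R N] [Module.Finite R M]
    (f : M →ₗ[R] N) (hf : Function.Surjective f) : moduleDim R N ≤ moduleDim R M := by
  have : Module.Finite R N := .of_surjective f hf
  simpa only [moduleDim, Module.supportDim_eq_ringKrullDim_quotient_annihilator] using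
    Module.supportDim_le_of_surjective f hf

lemma dimLT_dimQuot (n : ℕ) : dimLT R (dimQuot R M n) n = ⊥ := by
  unfold dimQuot
  rw [comap_dimLT (Submodule.subtype_injective _), dimLT_quotient_dimLT]

lemma moduleDim_dimQuot [IsNoetherian R M] [Nontrivial (dimQuot R M n)] :
    moduleDim R (dimQuot R M n) = n := by
  apply le_antisymm
  · exact (moduleDim_le_of_surjective _ (Submodule.mkQ_surjective _)).trans
      (moduleDim_submodule_le_iff.mpr le_rfl)
  · rw [← not_lt, moduleDim_lt_iff, dimLT_dimQuot]
    exact bot_ne_top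

lemma exists_moduleDim_eq [FiniteRingKrullDim R] [Nontrivial M] :
    ∃ n : ℕ, moduleDim R M = n := by
  have : Nontrivial (R ⧸ Module.annihilator R M) :=
    Ideal.Quotient.nontrivial_iff.mpr (mt Module.annihilator_eq_top_iff.mp (not_subsingleton M))
  have : FiniteRingKrullDim (R ⧸ Module.annihilator R M) :=
    finiteRingKrullDim_iff_ne_bot_and_top.mpr
      ⟨(WithBot.bot_lt_coe 0 |>.trans_le ringKrullDim_nonneg_of_nontrivial).ne',
        ((ringKrullDim_quotient_le _).trans_lt ringKrullDim_lt_top).ne⟩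
  exact ⟨_, krullDim_eq_length_of_finiteDimensionalOrder⟩

/-- `dimQuot` commutes with binary products. -/
noncomputable def dimQuotProdEquiv (R : Type*) [CommRing R] (M N : Type*) [AddCommGroup M]
    [Module R M] [AddCommGroup N] [Module R N] (n : ℕ) :
    dimQuot R (M × N) n ≃ₗ[R] dimQuot R M n × dimQuot R N n :=
  have hmem {m : ℕ} {x : M × N} : x ∈ dimLT R (M × N) m ↔ x.1 ∈ dimLT R M m ∧ x.2 ∈ dimLT R N m :=
    by rw [dimLT_prod, Submodule.mem_prod]
  let e : dimLT R (M × N) (n + 1) ≃ₗ[R] dimLT R M (n + 1) × dimLT R N (n + 1) :=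
    { toFun x := (⟨x.1.1, (hmem.mp x.2).1⟩, ⟨x.1.2, (hmem.mp x.2).2⟩)
      invFun x := ⟨(x.1, x.2), hmem.mpr ⟨x.1.2, x.2.2⟩⟩
      map_add' _ _ := rfl
      map_smul' _ _ := rfl }
  (Submodule.Quotient.equiv _ _ e (by
    rw [Submodule.map_equiv_eq_comap_symm]
    ext x
    exact hmem)).trans (quotientProdEquiv _ _)

end DimLT

section IntegralExtension

variable {R A : Type*} [CommRing R] [CommRing A] [Algebra R A] [Algebra.IsIntegral R A]

lemma coheight_comap_of_isIntegral (P : PrimeSpectrum A) :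
    Order.coheight (P.comap (algebraMap R A)) = Order.coheight P := by
  refine (Order.coheight_eq_of_strictMono _ (fun P Q hPQ ↦ ?_) (fun P q hPq ↦ ?_) P).symm
  · exact Ideal.IsIntegral.comap_lt_comap (R := R) (show P.asIdeal < Q.asIdeal from hPQ)
  · obtain ⟨Q, hPQ, hQ, hQq⟩ :=
      Ideal.exists_ideal_over_prime_of_isIntegral_of_isPrime q.asIdeal P.asIdeal hPq.le
    have hQq : PrimeSpectrum.comap (algebraMap R A) ⟨Q, hQ⟩ = q := PrimeSpectrum.ext hQq
    refine ⟨⟨Q, hQ⟩, lt_of_le_of_ne hPQ ?_, hQq⟩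
    rintro rfl
    exact hPq.ne hQq

lemma restrictScalars_dimLT {N : Type*} [AddCommGroup N] [Module A N] [Module R N]
    [IsScalarTower R A N] (n : ℕ) : (dimLT A N n).restrictScalars R = dimLT R N n := by
  ext x
  have hcomap : (Ideal.torsionOf A N x).comap (algebraMap R A) = Ideal.torsionOf R N x := by
    ext r
    simp only [Ideal.mem_comap, Ideal.mem_torsionOf_iff, algebraMap_smul]
  simp only [Submodule.restrictScalars_mem, mem_dimLT_iff_torsionOf, ← hcomap]
  constructor
  · intro h p hp
    obtain ⟨Q, hle, hQ, hQp⟩ := Ideal.exists_ideal_over_prime_of_isIntegral p.asIdeal _ hp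
    obtain rfl : PrimeSpectrum.comap (algebraMap R A) ⟨Q, hQ⟩ = p := PrimeSpectrum.ext hQp
    exact (coheight_comap_of_isIntegral _).trans_lt (h ⟨Q, hQ⟩ hle)
  · intro h P hP
    exact (coheight_comap_of_isIntegral P).symm.trans_lt (h _ (Ideal.comap_mono hP))

/-- `dimQuot` does not change under restriction of scalars along an integral extension. -/
noncomputable def dimQuotRestrictScalarsEquiv (R A : Type*) [CommRing R] [CommRing A] [Algebra R A]
    [Algebra.IsIntegral R A] (N : Type*) [AddCommGroup N] [Module A N] [Module R N]
    [IsScalarTower R A N] (n : ℕ) : dimQuot A N n ≃ₗ[R] dimQuot R N n :=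
  let e : dimLT A N (n + 1) ≃ₗ[R] dimLT R N (n + 1) :=
    ((Submodule.restrictScalarsEquiv R A N _).restrictScalars R).symm.trans
      (LinearEquiv.ofEq _ _ (restrictScalars_dimLT (n + 1)))
  (Submodule.Quotient.restrictScalarsEquiv R _).symm.trans <|
    Submodule.Quotient.equiv _ _ e <| by
      rw [Submodule.map_equiv_eq_comap_symm]
      ext x
      exact SetLike.ext_iff.mp (restrictScalars_dimLT n) (x : N)

end IntegralExtension

section MonotoneSequence

variable {α : Type*} [PartialOrder α] {F : ℕ → α}

lemma exists_ltSeries_mem_iff_of_monotone (hF : Monotone F) (n : ℕ) :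
    ∃ p : LTSeries α, p.last = F n ∧ ∀ x, x ∈ p ↔ ∃ m ≤ n, F m = x := by
  induction n with
  | zero =>
    refine ⟨RelSeries.singleton _ (F 0), rfl, fun x ↦ ⟨?_, ?_⟩⟩
    · rintro ⟨_, rfl⟩
      exact ⟨0, le_rfl, rfl⟩
    · rintro ⟨m, hm, rfl⟩
      exact ⟨0, congrArg F (Nat.le_zero.mp hm).symm⟩
  | succ n ih =>
    obtain ⟨p, hlast, hmem⟩ := ih
    simp only [Nat.le_succ_iff, or_and_right, exists_or, exists_eq_left]
    rcases (hF n.le_succ).eq_or_lt with heq | hlt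
    · refine ⟨p, hlast.trans heq, fun x ↦ (hmem x).trans (or_iff_left_of_imp ?_).symm⟩
      rintro rfl
      exact ⟨n, le_rfl, heq⟩
    · refine ⟨p.snoc (F (n + 1)) (hlast ▸ hlt), RelSeries.last_snoc .., fun x ↦ ?_⟩
      rw [RelSeries.mem_snoc, hmem, eq_comm]

variable {ℓ : ℕ} {D : Fin (ℓ + 1) → α}

lemma exists_castSucc_eq_and_succ_eq_of_lt (hF : Monotone F) (hD : StrictMono D)
    (hrange : Set.range D = Set.range F) {n : ℕ} (hn : F n < F (n + 1)) :
    ∃ i : Fin ℓ, D i.castSucc = F n ∧ D i.succ = F (n + 1) := by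
  obtain ⟨j, hj⟩ : F n ∈ Set.range D := hrange ▸ Set.mem_range_self n
  obtain ⟨k, hk⟩ : F (n + 1) ∈ Set.range D := hrange ▸ Set.mem_range_self (n + 1)
  have hjk : j < k := by rwa [← hD.lt_iff_lt, hj, hk]
  obtain ⟨i, rfl⟩ := Fin.exists_castSucc_eq.mpr (Fin.ne_last_of_lt hjk)
  obtain ⟨m, hm⟩ : D i.succ ∈ Set.range F := hrange ▸ Set.mem_range_self i.succ
  have hnm : n < m := hF.reflect_lt (by rw [hm, ← hj]; exact hD i.castSucc_lt_succ)
  refine ⟨i, hj, le_antisymm ?_ (hm ▸ hF hnm)⟩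
  exact hk ▸ hD.monotone (Fin.castSucc_lt_iff_succ_le.mp hjk)

lemma exists_castSucc_eq_and_succ_eq (hF : Monotone F) (hD : StrictMono D)
    (hrange : Set.range D = Set.range F) (i : Fin ℓ) :
    ∃ n, D i.castSucc = F n ∧ D i.succ = F (n + 1) := by
  obtain ⟨k, hk⟩ : D i.castSucc ∈ Set.range F := hrange ▸ Set.mem_range_self _
  obtain ⟨m, hm⟩ : D i.succ ∈ Set.range F := hrange ▸ Set.mem_range_self _
  have hkm : F k < F m := by
    rw [hk, hm]
    exact hD i.castSucc_lt_succ
  -- otherwise `F` would be constant from `k` on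
  obtain ⟨n, hn, hlt⟩ : ∃ n, F n = F k ∧ F n < F (n + 1) := by
    by_contra! h
    have hconst : ∀ n ≥ k, F n = F k := fun n hn ↦ by
      induction n, hn using Nat.le_induction with
      | base => rfl
      | succ n _ ih => rw [← ih, ((hF n.le_succ).eq_of_not_lt (h n ih)).symm]
    exact hkm.ne (hconst m (hF.reflect_lt hkm).le).symm
  obtain ⟨i', hi', hsucc⟩ := exists_castSucc_eq_and_succ_eq_of_lt hF hD hrange hlt
  obtain rfl : i' = i := Fin.castSucc_injective ℓ (hD.injective (hi'.trans (hn.trans hk)))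
  exact ⟨n, hi', hsucc⟩

end MonotoneSequence

section Filtration

variable {R : Type*} [CommRing R] {M : Type*} [AddCommGroup M] [Module R M]

section FiniteDimensional

variable [FiniteRingKrullDim R]

variable (R M) in
lemma exists_dimLT_eq_top [Module.Finite R M] : ∃ n : ℕ, dimLT R M n = ⊤ := by
  rcases subsingleton_or_nontrivial M with _ | _
  · exact ⟨0, Subsingleton.elim _ _⟩
  · obtain ⟨n, hn⟩ := exists_moduleDim_eq (R := R) (M := M)
    exact ⟨n + 1, moduleDim_lt_iff.mp (withBot_lt_natCast_add_one_iff.mpr hn.le)⟩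

variable [IsNoetherian R M]

lemma isGreatest_moduleDim_iff_mem_range_dimLT {N : Submodule R M} (hN : N ≠ ⊥) :
    IsGreatest {N' : Submodule R M | moduleDim R N' ≤ moduleDim R N} N ↔
      N ∈ Set.range (dimLT R M) := by
  have := Submodule.nontrivial_iff_ne_bot.mpr hN
  obtain ⟨n, hn⟩ := exists_moduleDim_eq (R := R) (M := N)
  have hset : {N' : Submodule R M | moduleDim R N' ≤ moduleDim R N} =
      Set.Iic (dimLT R M (n + 1)) :=
    Set.ext fun N' ↦ by rw [hn]; exact moduleDim_submodule_le_iff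
  rw [hset]
  constructor
  · exact fun h ↦ ⟨n + 1, isGreatest_Iic.unique h⟩
  · rintro ⟨m, rfl⟩
    have hnm : n < m := by
      have := hn ▸ moduleDim_submodule_lt_iff.mpr (le_refl (dimLT R M m))
      exact_mod_cast this
    exact ⟨moduleDim_submodule_le_iff.mp hn.le, fun N' hN' ↦ hN'.trans (dimLT_mono hnm)⟩

lemma isDimFiltration_iff {ℓ : ℕ} {D : Fin (ℓ + 1) → Submodule R M} :
    IsDimFiltration R M ℓ D ↔ StrictMono D ∧ Set.range D = Set.range (dimLT R M) := by
  constructor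
  · rintro ⟨hbot, -, hmono, hgreatest, hexists⟩
    refine ⟨hmono, Set.Subset.antisymm ?_ ?_⟩
    · rintro _ ⟨i, rfl⟩
      induction i using Fin.cases with
      | zero => exact ⟨0, dimLT_zero.trans hbot.symm⟩
      | succ i =>
        exact (isGreatest_moduleDim_iff_mem_range_dimLT
          (hmono i.castSucc_lt_succ).ne_bot).mp (hgreatest i)
    · rintro _ ⟨n, rfl⟩
      by_cases hn : dimLT R M n = ⊥
      · exact ⟨0, hbot.trans hn.symm⟩
      · exact hexists _ hn ((isGreatest_moduleDim_iff_mem_range_dimLT hn).mpr ⟨n, rfl⟩)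
  · rintro ⟨hmono, hrange⟩
    refine ⟨?_, ?_, hmono, fun i ↦ ?_, fun N hN h ↦ ?_⟩
    · obtain ⟨j, hj⟩ : ⊥ ∈ Set.range D := hrange ▸ ⟨0, dimLT_zero⟩
      exact le_bot_iff.mp (hj ▸ hmono.monotone (Fin.zero_le j))
    · obtain ⟨j, hj⟩ : ⊤ ∈ Set.range D := hrange ▸ exists_dimLT_eq_top R M
      exact top_le_iff.mp (hj ▸ hmono.monotone (Fin.le_last j))
    · exact (isGreatest_moduleDim_iff_mem_range_dimLT (hmono i.castSucc_lt_succ).ne_bot).mpr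
        (hrange ▸ Set.mem_range_self _)
    · exact hrange.ge ((isGreatest_moduleDim_iff_mem_range_dimLT hN).mp h)

variable (R M) in
lemma exists_isDimFiltration :
    ∃ (ℓ : ℕ) (D : Fin (ℓ + 1) → Submodule R M), IsDimFiltration R M ℓ D := by
  obtain ⟨n, hn⟩ := exists_dimLT_eq_top R M
  obtain ⟨p, -, hp⟩ := exists_ltSeries_mem_iff_of_monotone (dimLT_mono (R := R) (M := M)) n
  refine ⟨p.length, p, isDimFiltration_iff.mpr ⟨p.strictMono, Set.ext fun N ↦ (hp N).trans ?_⟩⟩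
  constructor
  · rintro ⟨m, -, rfl⟩
    exact ⟨m, rfl⟩
  · rintro ⟨m, rfl⟩
    rcases le_total m n with hmn | hnm
    · exact ⟨m, hmn, rfl⟩
    · exact ⟨n, le_rfl, hn.trans (top_le_iff.mp (hn ▸ dimLT_mono hnm)).symm⟩

end FiniteDimensional

variable [IsNoetherianRing R] [IsLocalRing R]

lemma isSeqCM_iff_depthGE [IsNoetherian R M] :
    IsSeqCM R M ↔ ∀ n, DepthGE R (dimQuot R M n) n := by
  have hdepth (n : ℕ) : IsCMModule R (dimQuot R M n) ↔ DepthGE R (dimQuot R M n) n :=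
    isCMModule_iff_depthGE fun _ ↦ moduleDim_dimQuot
  simp only [← hdepth]
  constructor
  · rintro ⟨ℓ, D, hD, hCM⟩ n hn
    obtain ⟨hmono, hrange⟩ := isDimFiltration_iff.mp hD
    have hlt : dimLT R M n < dimLT R M (n + 1) := by
      rw [Submodule.Quotient.nontrivial_iff, ne_eq, Submodule.comap_subtype_eq_top] at hn
      exact lt_of_le_not_ge (dimLT_mono n.le_succ) hn
    obtain ⟨i, hcast, hsucc⟩ := exists_castSucc_eq_and_succ_eq_of_lt dimLT_mono hmono hrange hlt
    have := hCM i
    rw [hcast, hsucc] at this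
    exact this hn
  · intro h
    obtain ⟨ℓ, D, hD⟩ := exists_isDimFiltration R M
    obtain ⟨hmono, hrange⟩ := isDimFiltration_iff.mp hD
    refine ⟨ℓ, D, hD, fun i ↦ ?_⟩
    obtain ⟨n, hcast, hsucc⟩ := exists_castSucc_eq_and_succ_eq dimLT_mono hmono hrange i
    rw [hcast, hsucc]
    exact h n

lemma isSeqCM_prod_iff {N : Type*} [AddCommGroup N] [Module R N] [Module.Finite R M]
    [Module.Finite R N] : IsSeqCM R (M × N) ↔ IsSeqCM R M ∧ IsSeqCM R N := by
  simp only [isSeqCM_iff_depthGE, depthGE_congr (dimQuotProdEquiv R M N _), depthGE_prod_iff,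
    forall_and]

lemma isSeqCM_iff_of_finite {A : Type*} [CommRing A] [IsLocalRing A] [Algebra R A]
    [Module.Finite R A] {N : Type*} [AddCommGroup N] [Module A N] [Module R N]
    [IsScalarTower R A N] [Module.Finite A N] : IsSeqCM A N ↔ IsSeqCM R N := by
  have : IsNoetherianRing A := isNoetherian_of_tower R inferInstance
  have : Module.Finite R N := .trans A N
  rw [isSeqCM_iff_depthGE, isSeqCM_iff_depthGE]
  exact forall_congr' fun n ↦
    depthGE_iff_of_finite.trans (depthGE_congr (dimQuotRestrictScalarsEquiv R A N n) n)

end Filtration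

/-- The idealization `R ⋉ M` is a sequentially Cohen-Macaulay local ring iff
`R` is a sequentially Cohen-Macaulay local ring and `M` is a sequentially Cohen-Macaulay
`R`-module. -/
theorem stmt11 (R : Type*) [CommRing R] [IsNoetherianRing R] [IsLocalRing R]
    (M : Type*) [AddCommGroup M] [Module R M] [Module.Finite R M] [Nontrivial M]
    [Module Rᵐᵒᵖ M] [IsCentralScalar R M]
    [IsLocalRing (TrivSqZeroExt R M)] :
    IsSeqCMRing (TrivSqZeroExt R M) ↔ IsSeqCMRing R ∧ IsSeqCM R M := by
  have : Module.Finite R (TrivSqZeroExt R M) := inferInstanceAs (Module.Finite R (R × M))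
  calc IsSeqCM (TrivSqZeroExt R M) (TrivSqZeroExt R M)
    _ ↔ IsSeqCM R (TrivSqZeroExt R M) := isSeqCM_iff_of_finite
    _ ↔ IsSeqCM R R ∧ IsSeqCM R M := isSeqCM_prod_iff
end

section
/- Let R be a Noetherian ring and M a nonzero finitely generated R-module with dimension filtration {D_i}_{0≤i≤ℓ}. Suppose dim R/p = dim R_P/pR_P for every p ∈ Ass_R M and every maximal ideal P containing p. Then M is sequentially Cohen-Macaulay over R if and only if M_P is sequentially Cohen-Macaulay over R_P for every P ∈ Supp_R M. -/
open IsLocalRing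

/-!
Let `Γ_{≤d}` and `Γ_{<d}` be the largest submodules of `M` of dimension at most, respectively less
than, `d`. The distinct `Γ_{≤d}` are the terms of the dimension filtration, so `M` is sequentially
Cohen-Macaulay exactly when every `Γ_{≤d} / Γ_{<d}` is Cohen-Macaulay. Both submodules are of the
form `Γ_Z(M)`, the elements supported in an upward closed set `Z` of primes, and forming `Γ_Z`
commutes with localization. It remains to compare dimensions. For a maximal ideal `Q` the hypothesis
says that `dim R/p` does not change when an associated prime `p ≤ Q` is extended to `R_Q`. For a
prime `P ≤ Q`, an associated prime `p ≤ P` of `M` is associated to one of the quotients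
`Γ_{≤d} / Γ_{<d}`; if these are Cohen-Macaulay, then `dim R_Q/p = dim R_P/p + dim R_Q/P`. Hence
localizing from `Q` to `P` lowers the dimensions of all associated primes by the same number, which
only renumbers the dimension filtration.
-/

section SupportedPart

variable {R : Type*} [CommRing R] {M : Type*} [AddCommGroup M] [Module R M]

/-- The submodule `Γ_Z(M)` of the elements of `M` with support in `Z`, that is, of those vanishing
in `M_p` for every prime `p ∉ Z`. Only the prime ideals of `Z` matter; `Z` is a set of ideals so
that it can be compared with `associatedPrimes R M`. -/
noncomputable def supportedPart (M : Type*) [AddCommGroup M] [Module R M] (Z : Set (Ideal R)) :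
    Submodule R M :=
  ⨅ p : {p : PrimeSpectrum R // p.asIdeal ∉ Z},
    LinearMap.ker (LocalizedModule.mkLinearMap p.1.asIdeal.primeCompl M)

theorem mem_supportedPart {Z : Set (Ideal R)} {m : M} :
    m ∈ supportedPart M Z ↔ ∀ p : PrimeSpectrum R, p.asIdeal ∉ Z → ∃ s ∉ p.asIdeal, s • m = 0 := by
  simp only [supportedPart, Submodule.mem_iInf, LocalizedModule.mem_ker_mkLinearMap_iff,
    Ideal.mem_primeCompl_iff, Subtype.forall]

theorem le_supportedPart_iff_support_subset {Z : Set (Ideal R)} {N : Submodule R M} :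
    N ≤ supportedPart M Z ↔ Module.support R N ⊆ PrimeSpectrum.asIdeal ⁻¹' Z := by
  have hsupp (p : PrimeSpectrum R) :
      p ∉ Module.support R N ↔ ∀ m ∈ N, ∃ s ∉ p.asIdeal, s • m = 0 := by
    simp [Module.notMem_support_iff', ← Subtype.coe_inj]
  simp only [SetLike.le_def, mem_supportedPart, Set.subset_def, Set.mem_preimage]
  refine ⟨fun h p => not_imp_not.1 fun hp => (hsupp p).2 fun m hm => h hm p hp,
    fun h m hm p hp => (hsupp p).1 (mt (h p) hp) m hm⟩

theorem disjoint_associatedPrimes_quotient_supportedPart [IsNoetherianRing R] {Z : Set (Ideal R)}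
    (hZ : IsUpperSet Z) : Disjoint (associatedPrimes R (M ⧸ supportedPart M Z)) Z := by
  refine Set.disjoint_left.2 fun q hq hqZ => ?_
  obtain ⟨hqp, x, hqx⟩ := isAssociatedPrime_iff.1 hq
  obtain ⟨m, rfl⟩ := Submodule.Quotient.mk_surjective _ x
  have hmem (s : R) : s ∈ q ↔ s • m ∈ supportedPart M Z := by
    rw [hqx, Submodule.mem_colon_singleton, Submodule.mem_bot, ← Submodule.Quotient.mk_smul,
      Submodule.Quotient.mk_eq_zero]
  refine hqp.ne_top ((Ideal.eq_top_iff_one q).2 ((hmem 1).2 ?_))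
  rw [one_smul, mem_supportedPart]
  intro p hp
  obtain ⟨s, hsq, hsp⟩ := SetLike.not_le_iff_exists.1 fun hqp => hp (hZ hqp hqZ)
  obtain ⟨t, htp, hts⟩ := mem_supportedPart.1 ((hmem s).1 hsq) p hp
  exact ⟨t * s, p.2.mul_notMem htp hsp, by rw [mul_smul, hts]⟩

theorem exists_associatedPrime_le_of_mem_support [IsNoetherianRing R] {p : PrimeSpectrum R}
    (hp : p ∈ Module.support R M) : ∃ q ∈ associatedPrimes R M, q ≤ p.asIdeal := by
  obtain ⟨m, hm⟩ := Module.mem_support_iff_exists_annihilator.1 hp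
  obtain ⟨q, hq, hqp⟩ := Ideal.exists_minimalPrimes_le hm
  exact ⟨q, associatedPrimes.subset_of_injective (Submodule.subtype_injective _)
    (Module.associatedPrimes.minimalPrimes_annihilator_subset_associatedPrimes R _ hq), hqp⟩

theorem exists_mem_support_of_mem_associatedPrimes [IsNoetherianRing R] {p : Ideal R}
    (hp : p ∈ associatedPrimes R M) : ∃ P ∈ Module.support R M, P.asIdeal = p := by
  obtain ⟨hp', f, hf⟩ := (isAssociatedPrime_iff_exists_injective_linearMap p M).1 hp
  refine ⟨⟨p, hp'⟩, Module.support_subset_of_injective f hf ?_, rfl⟩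
  simp [Module.mem_support_iff_of_finite, Ideal.annihilator_quotient]

theorem support_subset_iff_associatedPrimes_subset [IsNoetherianRing R] {Z : Set (Ideal R)}
    (hZ : IsUpperSet Z) :
    Module.support R M ⊆ PrimeSpectrum.asIdeal ⁻¹' Z ↔ associatedPrimes R M ⊆ Z := by
  constructor
  · intro h p hp
    obtain ⟨P, hP, rfl⟩ := exists_mem_support_of_mem_associatedPrimes hp
    exact h hP
  · intro h p hp
    obtain ⟨q, hq, hqp⟩ := exists_associatedPrime_le_of_mem_support hp
    exact hZ hqp (h hq)

theorem le_supportedPart_iff [IsNoetherianRing R] {Z : Set (Ideal R)} (hZ : IsUpperSet Z)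
    {N : Submodule R M} : N ≤ supportedPart M Z ↔ associatedPrimes R N ⊆ Z :=
  le_supportedPart_iff_support_subset.trans (support_subset_iff_associatedPrimes_subset hZ)

theorem associatedPrimes_submodule_subset (N : Submodule R M) :
    associatedPrimes R N ⊆ associatedPrimes R M :=
  associatedPrimes.subset_of_injective N.subtype_injective

theorem associatedPrimes_supportedPart [IsNoetherianRing R] {Z : Set (Ideal R)}
    (hZ : IsUpperSet Z) : associatedPrimes R (supportedPart M Z) = associatedPrimes R M ∩ Z := by
  refine Set.Subset.antisymm (Set.subset_inter (associatedPrimes_submodule_subset _)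
    ((le_supportedPart_iff hZ).1 le_rfl)) fun p ⟨hp, hpZ⟩ => ?_
  exact (associatedPrimes.subset_union_of_exact (Submodule.subtype_injective _)
    (LinearMap.exact_subtype_mkQ _) hp).resolve_right
      fun h => (disjoint_associatedPrimes_quotient_supportedPart hZ).notMem_of_mem_right hpZ h

theorem supportedPart_le_supportedPart_iff [IsNoetherianRing R] {Z Z' : Set (Ideal R)}
    (hZ : IsUpperSet Z) (hZ' : IsUpperSet Z') :
    supportedPart M Z ≤ supportedPart M Z' ↔ associatedPrimes R M ∩ Z ⊆ Z' := by
  rw [le_supportedPart_iff hZ', associatedPrimes_supportedPart hZ]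

theorem supportedPart_eq_supportedPart_iff [IsNoetherianRing R] {Z Z' : Set (Ideal R)}
    (hZ : IsUpperSet Z) (hZ' : IsUpperSet Z') :
    supportedPart M Z = supportedPart M Z' ↔ ∀ p ∈ associatedPrimes R M, p ∈ Z ↔ p ∈ Z' := by
  simp only [le_antisymm_iff, supportedPart_le_supportedPart_iff, hZ, hZ', iff_def, forall_and,
    Set.subset_def, Set.mem_inter_iff, and_imp]

theorem eq_supportedPart [IsNoetherianRing R] {Z : Set (Ideal R)} (hZ : IsUpperSet Z)
    {N : Submodule R M} (hN : associatedPrimes R N ⊆ Z)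
    (hQ : Disjoint (associatedPrimes R (M ⧸ N)) Z) : N = supportedPart M Z := by
  refine le_antisymm ((le_supportedPart_iff hZ).2 hN) ?_
  set L := (supportedPart M Z).map N.mkQ with hL
  have hLZ : associatedPrimes R L ⊆ Z := by
    rw [← support_subset_iff_associatedPrimes_subset hZ]
    exact (Module.support_subset_of_surjective _
      (N.mkQ.submoduleMap_surjective (supportedPart M Z))).trans
        (le_supportedPart_iff_support_subset.1 le_rfl)
  have hL0 : L = ⊥ := by
    rw [← Submodule.subsingleton_iff_eq_bot, ← not_nontrivial_iff_subsingleton]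
    intro hnt
    obtain ⟨p, hp⟩ := associatedPrimes.nonempty R L
    exact hQ.notMem_of_mem_left (associatedPrimes_submodule_subset L hp) (hLZ hp)
  rwa [hL, ← le_bot_iff, Submodule.map_le_iff_le_comap, Submodule.comap_bot,
    Submodule.ker_mkQ] at hL0

theorem associatedPrimes_diff_subset_quotient_supportedPart [IsNoetherianRing R]
    {Z : Set (Ideal R)} (hZ : IsUpperSet Z) :
    associatedPrimes R M \ Z ⊆ associatedPrimes R (M ⧸ supportedPart M Z) := by
  rintro p ⟨hp, hpZ⟩
  refine (associatedPrimes.subset_union_of_exact (Submodule.subtype_injective _)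
    (LinearMap.exact_subtype_mkQ _) hp).resolve_left fun h => hpZ ?_
  exact (le_supportedPart_iff hZ).1 le_rfl h

theorem comap_subtype_supportedPart (N : Submodule R M) (Z : Set (Ideal R)) :
    (supportedPart M Z).comap N.subtype = supportedPart N Z := by
  ext m
  simp only [Submodule.mem_comap, Submodule.subtype_apply, mem_supportedPart, ← Subtype.coe_inj,
    Submodule.coe_smul, Submodule.coe_zero]

theorem mem_associatedPrimes_supportedPart_quotient [IsNoetherianRing R] {Z Z' : Set (Ideal R)}
    (hZ : IsUpperSet Z) (hZ' : IsUpperSet Z') {p : Ideal R} (hp : p ∈ associatedPrimes R M)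
    (hpZ : p ∈ Z) (hpZ' : p ∉ Z') :
    p ∈ associatedPrimes R (supportedPart M Z ⧸
      (supportedPart M Z').comap (supportedPart M Z).subtype) := by
  rw [comap_subtype_supportedPart]
  refine associatedPrimes_diff_subset_quotient_supportedPart hZ' ⟨?_, hpZ'⟩
  rw [associatedPrimes_supportedPart hZ]
  exact ⟨hp, hpZ⟩

end SupportedPart

section Dimension

variable {R : Type*} [CommRing R]

theorem ringKrullDim_quotient_eq_coheight (p : PrimeSpectrum R) :
    ringKrullDim (R ⧸ p.asIdeal) = Order.coheight p := by
  rw [ringKrullDim_quotient, Order.coheight_eq_krullDim_Ici]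
  rfl

theorem ringKrullDim_quotient_add_one_le {p q : Ideal R} [hp : p.IsPrime] [hq : q.IsPrime]
    (h : p < q) : ringKrullDim (R ⧸ q) + 1 ≤ ringKrullDim (R ⧸ p) := by
  rw [ringKrullDim_quotient_eq_coheight ⟨p, hp⟩, ringKrullDim_quotient_eq_coheight ⟨q, hq⟩]
  exact_mod_cast Order.coheight_add_one_le (a := (⟨q, hq⟩ : PrimeSpectrum R)) (b := ⟨p, hp⟩) h

theorem ringKrullDim_quotient_antitone : Antitone fun p : Ideal R => ringKrullDim (R ⧸ p) :=
  fun _ _ h => ringKrullDim_le_of_surjective (Ideal.Quotient.factor h)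
    (Ideal.Quotient.factor_surjective h)

theorem isUpperSet_ringKrullDim_quotient_mem {U : Set (WithBot ℕ∞)} (hU : IsLowerSet U) :
    IsUpperSet {p : Ideal R | ringKrullDim (R ⧸ p) ∈ U} :=
  fun _ _ h hp => hU (ringKrullDim_quotient_antitone h) hp

variable {M : Type*} [AddCommGroup M] [Module R M]

theorem moduleDim_eq_supportDim [Module.Finite R M] : moduleDim R M = Module.supportDim R M :=
  (Module.supportDim_eq_ringKrullDim_quotient_annihilator R M).symm

variable [IsNoetherianRing R]

theorem supportDim_le_iff {d : WithBot ℕ∞} :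
    Module.supportDim R M ≤ d ↔ ∀ p ∈ associatedPrimes R M, ringKrullDim (R ⧸ p) ≤ d := by
  constructor
  · intro h p hp
    obtain ⟨-, f, hf⟩ := (isAssociatedPrime_iff_exists_injective_linearMap p M).1 hp
    rw [← Module.supportDim_quotient_eq_ringKrullDim]
    exact (Module.supportDim_le_of_injective f hf).trans h
  · intro h
    rw [Module.supportDim, Order.krullDim_eq_iSup_coheight]
    refine iSup_le fun p => ?_
    obtain ⟨q, hq, hqp⟩ := exists_associatedPrime_le_of_mem_support p.2
    calc (Order.coheight p : WithBot ℕ∞)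
        ≤ Order.coheight p.1 := by
          exact_mod_cast Order.coheight_le_coheight_apply_of_strictMono Subtype.val
            (fun _ _ => id) p
      _ = ringKrullDim (R ⧸ p.1.asIdeal) := (ringKrullDim_quotient_eq_coheight p.1).symm
      _ ≤ ringKrullDim (R ⧸ q) := ringKrullDim_quotient_antitone hqp
      _ ≤ d := h q hq

theorem ringKrullDim_quotient_le_supportDim {p : Ideal R} (hp : p ∈ associatedPrimes R M) :
    ringKrullDim (R ⧸ p) ≤ Module.supportDim R M :=
  supportDim_le_iff.1 le_rfl p hp

theorem exists_associatedPrime_ringKrullDim_eq [Module.Finite R M] [Nontrivial M] :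
    ∃ p ∈ associatedPrimes R M, ringKrullDim (R ⧸ p) = moduleDim R M := by
  obtain ⟨p, hp, hmax⟩ := Set.exists_max_image (associatedPrimes R M)
    (fun p => ringKrullDim (R ⧸ p)) (associatedPrimes.finite R M) (associatedPrimes.nonempty R M)
  exact ⟨p, hp, moduleDim_eq_supportDim (R := R) (M := M) ▸
    (ringKrullDim_quotient_le_supportDim hp).antisymm (supportDim_le_iff.2 hmax)⟩

/-- The submodule `Γ_U(M)` of `M` of sections supported in dimensions belonging to the lower set
`U`. For `U = Set.Iic d` (resp. `U = Set.Iio d`) it is the largest submodule of `M` of dimension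
at most (resp. less than) `d`; treating both at once is the reason for working with lower sets. -/
noncomputable def dimPart (R M : Type*) [CommRing R] [AddCommGroup M] [Module R M]
    (U : Set (WithBot ℕ∞)) : Submodule R M :=
  supportedPart M {p : Ideal R | ringKrullDim (R ⧸ p) ∈ U}

theorem le_dimPart_iff_associatedPrimes {U : Set (WithBot ℕ∞)} (hU : IsLowerSet U)
    {N : Submodule R M} :
    N ≤ dimPart R M U ↔ ∀ p ∈ associatedPrimes R N, ringKrullDim (R ⧸ p) ∈ U :=
  le_supportedPart_iff (isUpperSet_ringKrullDim_quotient_mem hU)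

theorem dimPart_le_dimPart_iff {U V : Set (WithBot ℕ∞)} (hU : IsLowerSet U) (hV : IsLowerSet V) :
    dimPart R M U ≤ dimPart R M V ↔
      ∀ p ∈ associatedPrimes R M, ringKrullDim (R ⧸ p) ∈ U → ringKrullDim (R ⧸ p) ∈ V :=
  (supportedPart_le_supportedPart_iff (isUpperSet_ringKrullDim_quotient_mem hU)
    (isUpperSet_ringKrullDim_quotient_mem hV)).trans (by
      simp only [Set.subset_def, Set.mem_inter_iff, Set.mem_ofPred_eq, and_imp])

theorem dimPart_mono {U V : Set (WithBot ℕ∞)} (hU : IsLowerSet U) (hV : IsLowerSet V)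
    (h : U ⊆ V) : dimPart R M U ≤ dimPart R M V :=
  (dimPart_le_dimPart_iff hU hV).2 fun _ _ hp => h hp

variable [Module.Finite R M]

theorem le_dimPart_iff {U : Set (WithBot ℕ∞)} (hU : IsLowerSet U) {N : Submodule R M}
    (hN : N ≠ ⊥) : N ≤ dimPart R M U ↔ moduleDim R N ∈ U := by
  have : Nontrivial N := Submodule.nontrivial_iff_ne_bot.2 hN
  rw [le_dimPart_iff_associatedPrimes hU]
  constructor
  · intro h
    obtain ⟨p, hp, hpd⟩ := exists_associatedPrime_ringKrullDim_eq (R := R) (M := N)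
    exact hpd ▸ h p hp
  · intro h p hp
    rw [moduleDim_eq_supportDim] at h
    exact hU (ringKrullDim_quotient_le_supportDim hp) h

theorem le_dimPart_Iic_iff {d : WithBot ℕ∞} {N : Submodule R M} :
    N ≤ dimPart R M (Set.Iic d) ↔ moduleDim R N ≤ d := by
  rw [le_dimPart_iff_associatedPrimes (isLowerSet_Iic d), moduleDim_eq_supportDim,
    supportDim_le_iff]
  rfl

theorem moduleDim_submodule_le_bot_iff {N : Submodule R M} : moduleDim R N ≤ ⊥ ↔ N = ⊥ := by
  rw [le_bot_iff, moduleDim_eq_supportDim, Module.supportDim_eq_bot_iff_subsingleton,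
    Submodule.subsingleton_iff_eq_bot]

theorem isGreatest_dimPart {U : Set (WithBot ℕ∞)} (hU : IsLowerSet U) :
    IsGreatest {N : Submodule R M | moduleDim R N ≤ moduleDim R (dimPart R M U)}
      (dimPart R M U) := by
  refine ⟨le_refl (moduleDim R _), fun N (hN : moduleDim R N ≤ _) => ?_⟩
  by_cases hN0 : N = ⊥
  · exact hN0 ▸ bot_le
  have hU0 : dimPart R M U ≠ ⊥ := fun h =>
    hN0 (moduleDim_submodule_le_bot_iff.1 (hN.trans (moduleDim_submodule_le_bot_iff.2 h)))
  exact (le_dimPart_iff hU hN0).2 (hU hN ((le_dimPart_iff hU hU0).1 le_rfl))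

theorem eq_dimPart_of_isGreatest {N : Submodule R M}
    (h : IsGreatest {N' : Submodule R M | moduleDim R N' ≤ moduleDim R N} N) :
    N = dimPart R M (Set.Iic (moduleDim R N)) :=
  le_antisymm (le_dimPart_Iic_iff.2 le_rfl) (h.2 (le_dimPart_Iic_iff.1 le_rfl))

end Dimension

section DimensionFiltration

theorem exists_orderEmbedding_range_eq {α : Type*} [LinearOrder α] {s : Set α} (hs : s.Finite)
    (hne : s.Nonempty) : ∃ (ℓ : ℕ) (e : Fin (ℓ + 1) ↪o α), Set.range e = s := by
  lift s to Finset α using hs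
  have hcard : s.card = s.card - 1 + 1 :=
    (Nat.sub_add_cancel (Finset.card_pos.2 (Finset.coe_nonempty.1 hne))).symm
  exact ⟨s.card - 1, s.orderEmbOfFin hcard, s.range_orderEmbOfFin hcard⟩

variable {R : Type*} [CommRing R] [IsNoetherianRing R] {M : Type*} [AddCommGroup M] [Module R M]
  {ℓ : ℕ}

theorem dimPart_Iic_castSucc {e : Fin (ℓ + 1) ↪o WithBot ℕ∞}
    (he : (fun p => ringKrullDim (R ⧸ p)) '' associatedPrimes R M ⊆ Set.range e) (i : Fin ℓ) :
    dimPart R M (Set.Iic (e i.castSucc)) = dimPart R M (Set.Iio (e i.succ)) := by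
  refine (supportedPart_eq_supportedPart_iff
    (isUpperSet_ringKrullDim_quotient_mem (isLowerSet_Iic _))
    (isUpperSet_ringKrullDim_quotient_mem (isLowerSet_Iio _))).2 fun p hp => ?_
  obtain ⟨k, hk⟩ := he (Set.mem_image_of_mem _ hp)
  simp only [Set.mem_ofPred_eq, Set.mem_Iic, Set.mem_Iio, ← hk, e.le_iff_le, e.lt_iff_lt,
    Fin.le_castSucc_iff]

variable [Module.Finite R M]

theorem IsDimFiltration.exists_eq_dimPart {D : Fin (ℓ + 1) → Submodule R M}
    (hD : IsDimFiltration R M ℓ D) {U : Set (WithBot ℕ∞)} (hU : IsLowerSet U) :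
    ∃ i, D i = dimPart R M U := by
  obtain ⟨hzero, -, -, -, hmem⟩ := hD
  by_cases h : dimPart R M U = ⊥
  · exact ⟨0, hzero.trans h.symm⟩
  · exact hmem _ h (isGreatest_dimPart hU)

theorem IsDimFiltration.eq_dimPart {D : Fin (ℓ + 1) → Submodule R M}
    (hD : IsDimFiltration R M ℓ D) (i : Fin (ℓ + 1)) :
    D i = dimPart R M (Set.Iic (moduleDim R (D i))) := by
  obtain ⟨hzero, -, -, hgreatest, -⟩ := hD
  refine eq_dimPart_of_isGreatest ?_
  cases i using Fin.cases with
  | zero =>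
    refine ⟨le_refl (moduleDim R _), fun N (hN : moduleDim R N ≤ _) => ?_⟩
    exact (moduleDim_submodule_le_bot_iff.1
      (hN.trans (moduleDim_submodule_le_bot_iff.2 hzero))).trans_le bot_le
  | succ i => exact hgreatest i

theorem IsDimFiltration.exists_succ_eq_dimPart {D : Fin (ℓ + 1) → Submodule R M}
    (hD : IsDimFiltration R M ℓ D) {d : WithBot ℕ∞}
    (hd : dimPart R M (Set.Iio d) < dimPart R M (Set.Iic d)) :
    ∃ i : Fin ℓ, D i.succ = dimPart R M (Set.Iic d) ∧ D i.castSucc = dimPart R M (Set.Iio d) := by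
  have hmono : StrictMono D := hD.2.2.1
  obtain ⟨i, hi⟩ := hD.exists_eq_dimPart (isLowerSet_Iic d)
  obtain ⟨j, hj⟩ := hD.exists_eq_dimPart (isLowerSet_Iio d)
  rw [← hi, ← hj, hmono.lt_iff_lt] at hd
  obtain ⟨k, rfl⟩ := Fin.exists_succ_eq.2 (Fin.ne_zero_of_lt hd)
  have hk : k.castSucc ≤ j := by
    refine hmono.le_iff_le.1 ?_
    rw [hj, hD.eq_dimPart k.castSucc]
    refine dimPart_mono (isLowerSet_Iic _) (isLowerSet_Iio _) (Set.Iic_subset_Iio.2 ?_)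
    by_contra! hle
    refine (hmono (Fin.castSucc_lt_succ (i := k))).not_ge ?_
    rw [hi, hD.eq_dimPart k.castSucc]
    exact dimPart_mono (isLowerSet_Iic _) (isLowerSet_Iic _) (Set.Iic_subset_Iic.2 hle)
  exact ⟨k, hi, le_antisymm hk (Fin.le_castSucc_iff.2 hd) ▸ hj⟩

theorem isDimFiltration_dimPart {e : Fin (ℓ + 1) ↪o WithBot ℕ∞}
    (he : Set.range e = insert ⊥ ((fun p => ringKrullDim (R ⧸ p)) '' associatedPrimes R M)) :
    IsDimFiltration R M ℓ fun i => dimPart R M (Set.Iic (e i)) := by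
  have hmem {p : Ideal R} (hp : p ∈ associatedPrimes R M) : ∃ i, e i = ringKrullDim (R ⧸ p) :=
    he.ge (Set.mem_insert_of_mem _ (Set.mem_image_of_mem _ hp))
  refine ⟨?_, ?_, ?_, fun i => isGreatest_dimPart (isLowerSet_Iic _), ?_⟩
  · obtain ⟨i, hi⟩ : ∃ i, e i = ⊥ := he.ge (Set.mem_insert _ _)
    exact moduleDim_submodule_le_bot_iff.1
      ((le_dimPart_Iic_iff.1 le_rfl).trans ((e.monotone (Fin.zero_le i)).trans hi.le))
  · rw [eq_top_iff, le_dimPart_iff_associatedPrimes (isLowerSet_Iic _)]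
    intro p hp
    obtain ⟨i, hi⟩ := hmem (associatedPrimes_submodule_subset _ hp)
    exact hi.ge.trans (e.monotone (Fin.le_last i))
  · intro i j hij
    have hlt : e i < e j := e.strictMono hij
    obtain ⟨p, hp, hpj⟩ := (he.le ⟨j, rfl⟩).resolve_left (bot_le.trans_lt hlt).ne'
    refine (dimPart_mono (isLowerSet_Iic _) (isLowerSet_Iic _)
      (Set.Iic_subset_Iic.2 hlt.le)).lt_of_not_ge fun hle => ?_
    exact hlt.not_ge (hpj.ge.trans ((dimPart_le_dimPart_iff (isLowerSet_Iic _)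
      (isLowerSet_Iic _)).1 hle p hp hpj.le))
  · intro N hN hgreatest
    have : Nontrivial N := Submodule.nontrivial_iff_ne_bot.2 hN
    obtain ⟨p, hp, hpd⟩ := exists_associatedPrime_ringKrullDim_eq (R := R) (M := N)
    obtain ⟨i, hi⟩ := hmem (associatedPrimes_submodule_subset _ hp)
    exact ⟨i, by simp only [hi, hpd, ← eq_dimPart_of_isGreatest hgreatest]⟩

theorem exists_isDimFiltration_iff {C : Submodule R M → Submodule R M → Prop}
    (hC : ∀ N, C N N) :
    (∃ (ℓ : ℕ) (D : Fin (ℓ + 1) → Submodule R M), IsDimFiltration R M ℓ D ∧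
      ∀ i : Fin ℓ, C (D i.succ) (D i.castSucc)) ↔
    ∀ d, C (dimPart R M (Set.Iic d)) (dimPart R M (Set.Iio d)) := by
  constructor
  · rintro ⟨ℓ, D, hD, h⟩ d
    rcases (dimPart_mono (R := R) (M := M) (isLowerSet_Iio d) (isLowerSet_Iic d)
      Set.Iio_subset_Iic_self).eq_or_lt with heq | hlt
    · exact heq ▸ hC _
    · obtain ⟨i, hi, hi'⟩ := hD.exists_succ_eq_dimPart hlt
      exact hi ▸ hi' ▸ h i
  · intro h
    obtain ⟨ℓ, e, he⟩ := exists_orderEmbedding_range_eq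
      (((associatedPrimes.finite R M).image fun p => ringKrullDim (R ⧸ p)).insert ⊥)
      (Set.insert_nonempty _ _)
    refine ⟨ℓ, _, isDimFiltration_dimPart he, fun i => ?_⟩
    rw [dimPart_Iic_castSucc ((Set.subset_insert _ _).trans he.ge)]
    exact h _

end DimensionFiltration

section CohenMacaulay

open RingTheory.Sequence CategoryTheory CategoryTheory.Abelian
open scoped Pointwise

universe u v

theorem exists_isRegular_quotSMulTop {R : Type u} [CommRing R] [IsNoetherianRing R] [Small.{v} R]
    {M : Type v} [AddCommGroup M] [Module R M] [Module.Finite R M] {I : Ideal R} {x : R}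
    (hreg : IsSMulRegular M x) (hM : I • (⊤ : Submodule R M) < ⊤)
    (hMx : I • (⊤ : Submodule R (QuotSMulTop x M)) < ⊤) {n : ℕ}
    (h : ∃ rs : List R, rs.length = n + 1 ∧ (∀ r ∈ rs, r ∈ I) ∧ IsRegular M rs) :
    ∃ rs : List R, rs.length = n ∧ (∀ r ∈ rs, r ∈ I) ∧ IsRegular (QuotSMulTop x M) rs := by
  -- By Rees' theorem the hypothesis and the conclusion say that `Ext^i(R/I, -)` vanishes for
  -- `i ≤ n` on `M`, respectively for `i < n` on `M/xM`.
  have hext := ((ModuleCat.exists_isRegular_tfae I (n + 1) (ModuleCat.of R M) hM).out 3 1).1 h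
  refine ((ModuleCat.exists_isRegular_tfae I n (ModuleCat.of R (QuotSMulTop x M)) hMx).out 1 3).1
    fun i hi => ?_
  have zero (j : ℕ) (hj : j < n + 1) := AddCommGrpCat.isZero_of_iff_subsingleton.2 (hext j hj)
  exact AddCommGrpCat.subsingleton_of_isZero <| ShortComplex.Exact.isZero_of_both_zeros
    (Ext.covariant_sequence_exact₃' _
      (IsSMulRegular.smulShortComplex_shortExact (M := ModuleCat.of R M) hreg) i (i + 1) rfl)
    ((zero i (by omega)).eq_zero_of_src _) ((zero (i + 1) (by omega)).eq_zero_of_tgt _)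

theorem exists_mem_torsionBySet_notMem_smul_top {R : Type*} [CommRing R] {M : Type*}
    [AddCommGroup M] [Module R M] [IsNoetherian R M] {x : R} (hx : x ∈ (⊥ : Ideal R).jacobson)
    (hreg : IsSMulRegular M x) {I : Ideal R} (hI : Submodule.torsionBySet R M I ≠ ⊥) :
    ∃ u ∈ Submodule.torsionBySet R M I, u ∉ x • (⊤ : Submodule R M) := by
  by_contra! hle
  refine hI (Submodule.eq_bot_of_le_smul_of_le_jacobson_bot (Ideal.span {x}) _
    (IsNoetherian.noetherian _) (fun u hu => ?_) ((Ideal.span_singleton_le_iff_mem _).2 hx))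
  obtain ⟨v, -, rfl⟩ := (Submodule.mem_smul_pointwise_iff_exists _ _ _).1 (hle u hu)
  rw [Submodule.ideal_span_singleton_smul]
  refine Submodule.smul_mem_pointwise_smul _ _ _
    ((Submodule.mem_torsionBySet_iff _ _).2 fun a => hreg ?_)
  simpa only [smul_zero, smul_comm x] using (Submodule.mem_torsionBySet_iff _ _).1 hu a

theorem exists_associatedPrime_quotSMulTop_gt {R : Type*} [CommRing R] [IsNoetherianRing R]
    {M : Type*} [AddCommGroup M] [Module R M] [Module.Finite R M] {x : R}
    (hx : x ∈ (⊥ : Ideal R).jacobson) (hreg : IsSMulRegular M x) {p : Ideal R}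
    (hp : p ∈ associatedPrimes R M) : ∃ q ∈ associatedPrimes R (QuotSMulTop x M), p < q := by
  obtain ⟨hp', m, hpm⟩ := isAssociatedPrime_iff.1 hp
  have htors : Submodule.torsionBySet R M p ≠ ⊥ := by
    refine (Submodule.ne_bot_iff _).2 ⟨m, (Submodule.mem_torsionBySet_iff _ _).2 fun a => ?_, ?_⟩
    · simpa [hpm] using a.2
    · rintro rfl
      exact hp'.ne_top (by simp [hpm])
  obtain ⟨u, hu, hux⟩ := exists_mem_torsionBySet_notMem_smul_top hx hreg htors
  obtain ⟨q, hq, hle⟩ := exists_le_isAssociatedPrime_of_isNoetherianRing R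
    (Submodule.Quotient.mk u : QuotSMulTop x M) (mt (Submodule.Quotient.mk_eq_zero _).1 hux)
  have hmem {a : R} (ha : a • u ∈ x • (⊤ : Submodule R M)) : a ∈ q :=
    hle (Submodule.mem_colon_singleton.2 ((Submodule.Quotient.mk_eq_zero _).2 ha))
  refine ⟨q, hq, SetLike.lt_iff_le_and_exists.2 ⟨fun a ha => hmem ?_, x, hmem ?_, fun hxp => ?_⟩⟩
  · rw [(Submodule.mem_torsionBySet_iff _ _).1 hu ⟨a, ha⟩]
    exact zero_mem _
  · exact Submodule.smul_mem_pointwise_smul _ _ _ trivial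
  · exact (biUnion_associatedPrimes_eq_compl_regular R M).subset (Set.mem_biUnion hp hxp) hreg

section IsLocalRing

variable {A : Type u} [CommRing A] [IsLocalRing A] {M : Type v} [AddCommGroup M] [Module A M]

/-- `M` is a nonzero Cohen-Macaulay module of dimension `n` over a local ring, in the form in which
the property is used: the maximal ideal contains an `M`-regular sequence of length `n = dim M`. -/
def IsCMOfDim (A : Type*) [CommRing A] [IsLocalRing A] (M : Type*) [AddCommGroup M] [Module A M]
    (n : ℕ) : Prop :=
  (∃ rs : List A, rs.length = n ∧ (∀ r ∈ rs, r ∈ maximalIdeal A) ∧ IsRegular M rs) ∧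
    Module.supportDim A M = n

theorem IsCMOfDim.nontrivial {n : ℕ} (h : IsCMOfDim A M n) : Nontrivial M := by
  obtain ⟨⟨rs, -, -, hrs⟩, -⟩ := h
  exact hrs.nontrivial

theorem IsCMOfDim.congr {N : Type*} [AddCommGroup N] [Module A N] {n : ℕ} (h : IsCMOfDim A M n)
    (e : M ≃ₗ[A] N) : IsCMOfDim A N n := by
  obtain ⟨⟨rs, hlen, hmem, hrs⟩, hdim⟩ := h
  exact ⟨⟨rs, hlen, hmem, (e.isRegular_congr rs).1 hrs⟩,
    (Module.supportDim_eq_of_equiv e).symm.trans hdim⟩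

theorem IsCMModule.congr {N : Type*} [AddCommGroup N] [Module A N] (h : IsCMModule A M)
    (e : M ≃ₗ[A] N) : IsCMModule A N := fun _ => by
  have hdepth : moduleDepth A M = moduleDepth A N := by simp only [moduleDepth, e.isRegular_congr]
  have hdim : moduleDim A M = moduleDim A N := by rw [moduleDim, moduleDim, e.annihilator_eq]
  rw [← hdepth, ← hdim]
  exact h e.toEquiv.nontrivial

variable [Module.Finite A M]

theorem maximalIdeal_smul_top_lt_top [Nontrivial M] :
    maximalIdeal A • (⊤ : Submodule A M) < ⊤ :=
  (Submodule.top_ne_ideal_smul_of_le_jacobson_annihilator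
    (IsLocalRing.maximalIdeal_le_jacobson _)).symm.lt_top

theorem nontrivial_quotSMulTop [Nontrivial M] {x : A} (hx : x ∈ maximalIdeal A) :
    Nontrivial (QuotSMulTop x M) := by
  rw [Submodule.Quotient.nontrivial_iff, ← Submodule.ideal_span_singleton_smul]
  exact ((Submodule.smul_mono_left ((Ideal.span_singleton_le_iff_mem _).2 hx)).trans_lt
    maximalIdeal_smul_top_lt_top).ne

variable [IsNoetherianRing A]

theorem length_le_ringKrullDim_quotient {rs : List A} (hmem : ∀ r ∈ rs, r ∈ maximalIdeal A)
    (hrs : IsRegular M rs) {p : Ideal A} (hp : p ∈ associatedPrimes A M) :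
    (rs.length : WithBot ℕ∞) ≤ ringKrullDim (A ⧸ p) := by
  have hprime : p.IsPrime := hp.1
  induction rs generalizing M p with
  | nil => exact ringKrullDim_nonneg_of_nontrivial
  | cons x rs ih =>
    obtain ⟨hx, hmem⟩ := List.forall_mem_cons.1 hmem
    obtain ⟨hreg, hrs⟩ := (isRegular_cons_iff M x rs).1 hrs
    obtain ⟨q, hq, hpq⟩ := exists_associatedPrime_quotSMulTop_gt
      (by rwa [IsLocalRing.jacobson_eq_maximalIdeal ⊥ bot_ne_top]) hreg hp
    have hprime' : q.IsPrime := hq.1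
    calc ((x :: rs).length : WithBot ℕ∞)
        = rs.length + 1 := by push_cast [List.length_cons]; rfl
      _ ≤ ringKrullDim (A ⧸ q) + 1 := by gcongr; exact ih hmem hrs hq hprime'
      _ ≤ ringKrullDim (A ⧸ p) := ringKrullDim_quotient_add_one_le hpq

theorem length_le_supportDim {rs : List A} (hmem : ∀ r ∈ rs, r ∈ maximalIdeal A)
    (hrs : IsRegular M rs) : (rs.length : WithBot ℕ∞) ≤ Module.supportDim A M := by
  have : Nontrivial M := hrs.nontrivial
  obtain ⟨p, hp⟩ := associatedPrimes.nonempty A M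
  exact (length_le_ringKrullDim_quotient hmem hrs hp).trans (ringKrullDim_quotient_le_supportDim hp)

theorem IsCMOfDim.ringKrullDim_quotient_eq {n : ℕ} (h : IsCMOfDim A M n) {p : Ideal A}
    (hp : p ∈ associatedPrimes A M) : ringKrullDim (A ⧸ p) = n := by
  obtain ⟨⟨rs, rfl, hmem, hrs⟩, hdim⟩ := h
  exact le_antisymm (hdim ▸ ringKrullDim_quotient_le_supportDim hp)
    (length_le_ringKrullDim_quotient hmem hrs hp)

theorem IsCMOfDim.isAntichain_associatedPrimes {n : ℕ} (h : IsCMOfDim A M n) :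
    IsAntichain (· ≤ ·) (associatedPrimes A M) := by
  intro p hp q hq hne hle
  have := hp.1
  have := hq.1
  have hlt := ringKrullDim_quotient_add_one_le (hle.lt_of_ne hne)
  rw [h.ringKrullDim_quotient_eq hp, h.ringKrullDim_quotient_eq hq] at hlt
  exact n.not_succ_le_self (by exact_mod_cast hlt)

theorem exists_natCast_eq_ringKrullDim_quotient {I : Ideal A} (hI : I ≠ ⊤) :
    ∃ n : ℕ, ringKrullDim (A ⧸ I) = n := by
  have : Nontrivial (A ⧸ I) := Ideal.Quotient.nontrivial_iff.2 hI
  have : IsLocalRing (A ⧸ I) := .of_surjective' (Ideal.Quotient.mk I) Ideal.Quotient.mk_surjective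
  exact ⟨_, Order.krullDim_eq_length_of_finiteDimensionalOrder⟩

theorem exists_natCast_eq_supportDim [Nontrivial M] : ∃ n : ℕ, Module.supportDim A M = n := by
  rw [Module.supportDim_eq_ringKrullDim_quotient_annihilator]
  exact exists_natCast_eq_ringKrullDim_quotient
    (mt Module.annihilator_eq_top_iff.1 (not_subsingleton M))

theorem isCMModule_iff_exists_isCMOfDim [Nontrivial M] :
    IsCMModule A M ↔ ∃ n, IsCMOfDim A M n := by
  obtain ⟨n, hn⟩ := exists_natCast_eq_supportDim (A := A) (M := M)
  set depths : Set ℕ∞ := {k | ∃ rs : List A, (rs.length : ℕ∞) = k ∧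
    (∀ r ∈ rs, r ∈ maximalIdeal A) ∧ IsRegular M rs}
  have hbound : ∀ k ∈ depths, k ≤ n := by
    rintro k ⟨rs, rfl, hmem, hrs⟩
    exact_mod_cast hn ▸ length_le_supportDim hmem hrs
  have hdepth : IsCMModule A M ↔ sSup depths = n := by
    rw [IsCMModule, moduleDim_eq_supportDim, hn, forall_prop_of_true ‹Nontrivial M›]
    exact WithBot.coe_inj
  rw [hdepth]
  constructor
  · intro h
    have : Nonempty depths := ⟨0, [], rfl, List.forall_mem_nil _, IsRegular.nil A M⟩
    obtain ⟨rs, hlen, hrs⟩ := ENat.sSup_mem_of_nonempty_of_lt_top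
      (h.trans_lt (ENat.natCast_lt_top n))
    exact ⟨n, ⟨rs, by exact_mod_cast hlen.trans h, hrs⟩, hn⟩
  · rintro ⟨m, ⟨rs, rfl, hmem, hrs⟩, hm⟩
    obtain rfl : n = rs.length := by exact_mod_cast hn.symm.trans hm
    exact le_antisymm (sSup_le hbound) (le_sSup ⟨rs, rfl, hmem, hrs⟩)

theorem IsCMOfDim.exists_quotSMulTop [Small.{v} A] {n : ℕ} (h : IsCMOfDim A M n) {x : A}
    (hx : x ∈ maximalIdeal A) (hreg : IsSMulRegular M x) :
    ∃ k, n = k + 1 ∧ IsCMOfDim A (QuotSMulTop x M) k := by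
  have := h.nontrivial
  have := nontrivial_quotSMulTop (M := M) hx
  have hdim := (Module.supportDim_quotSMulTop_succ_eq_supportDim hreg hx).trans h.2
  obtain ⟨k, hk⟩ := exists_natCast_eq_supportDim (A := A) (M := QuotSMulTop x M)
  obtain rfl : k + 1 = n := by exact_mod_cast hk ▸ hdim
  exact ⟨k, rfl, exists_isRegular_quotSMulTop hreg maximalIdeal_smul_top_lt_top
    maximalIdeal_smul_top_lt_top h.1, hk⟩

theorem IsCMOfDim.of_quotSMulTop {n : ℕ} {x : A} (h : IsCMOfDim A (QuotSMulTop x M) n)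
    (hx : x ∈ maximalIdeal A) (hreg : IsSMulRegular M x) : IsCMOfDim A M (n + 1) := by
  obtain ⟨⟨rs, rfl, hmem, hrs⟩, hdim⟩ := h
  refine ⟨⟨x :: rs, rfl, List.forall_mem_cons.2 ⟨hx, hmem⟩, IsRegular.cons hreg hrs⟩, ?_⟩
  rw [← Module.supportDim_quotSMulTop_succ_eq_supportDim hreg hx, hdim]
  rfl

theorem isCMOfDim_zero [Nontrivial M]
    (h : ∀ p ∈ associatedPrimes A M, p = maximalIdeal A) : IsCMOfDim A M 0 := by
  refine ⟨⟨[], rfl, List.forall_mem_nil _, IsRegular.nil A M⟩, le_antisymm ?_ ?_⟩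
  · refine supportDim_le_iff.2 fun p hp => ?_
    rw [h p hp]
    exact (ringKrullDim_eq_zero_of_isField (Ideal.Quotient.field (maximalIdeal A)).toIsField).le
  · simpa using length_le_supportDim (A := A) (M := M) (List.forall_mem_nil _) (IsRegular.nil A M)

end IsLocalRing

end CohenMacaulay

section Localization

open scoped Pointwise

universe u v

section Submonoid

variable {R : Type*} [CommRing R] (S : Submonoid R) (M : Type*) [AddCommGroup M] [Module R M]

theorem localized_smul_top (x : R) :
    (x • (⊤ : Submodule R M)).localized S =
      algebraMap R (Localization S) x • (⊤ : Submodule (Localization S) (LocalizedModule S M)) := by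
  rw [← Submodule.ideal_span_singleton_smul, ← Submodule.ideal_span_singleton_smul]
  refine (Submodule.localized'_smul (Localization S) S (LocalizedModule.mkLinearMap S M) ⊤
    (Ideal.span {x})).trans ?_
  rw [Submodule.localized'_top, Ideal.span, Submodule.localized'_span, Set.image_singleton]
  rfl

/-- Localization commutes with the quotient by the multiples of a ring element. -/
noncomputable def localizedQuotSMulTopEquiv (x : R) :
    LocalizedModule S (QuotSMulTop x M) ≃ₗ[Localization S]
      QuotSMulTop (algebraMap R (Localization S) x) (LocalizedModule S M) :=
  (localizedQuotientEquiv S (x • (⊤ : Submodule R M))).symm ≪≫ₗ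
    Submodule.quotEquivOfEq _ _ (localized_smul_top S M x)

variable {S M}

theorem isSMulRegular_localizedModule_iff {x : R} :
    IsSMulRegular (LocalizedModule S M) (algebraMap R (Localization S) x) ↔
      ∀ m : M, x • m = 0 → ∃ t ∈ S, t • m = 0 := by
  have mk_eq_zero (m : M) (s : S) : LocalizedModule.mk m s = 0 ↔ ∃ t ∈ S, t • m = 0 := by
    rw [IsLocalizedModule.mk_eq_mk', IsLocalizedModule.mk'_eq_zero']
    simp only [Subtype.exists, Submonoid.mk_smul, exists_prop]
  rw [isSMulRegular_iff_right_eq_zero_of_smul]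
  constructor
  · intro h m hm
    rw [← mk_eq_zero m 1]
    refine h _ ?_
    rw [algebraMap_smul, LocalizedModule.smul'_mk, hm, LocalizedModule.zero_mk]
  · intro h y
    induction y using LocalizedModule.induction_on with | _ m s
    rw [algebraMap_smul, LocalizedModule.smul'_mk, mk_eq_zero, mk_eq_zero]
    rintro ⟨t, ht, htm⟩
    obtain ⟨r, hr, hrm⟩ := h (t • m) (by rw [smul_comm, htm])
    exact ⟨r * t, S.mul_mem hr ht, by rw [mul_smul, hrm]⟩

theorem localized_comap_subtype (N N' : Submodule R M) :
    (N'.comap N.subtype).localized' (Localization S) S (N.toLocalized S) =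
      (N'.localized S).comap (N.localized S).subtype := by
  have hval (m : N) (s : S) : (IsLocalizedModule.mk' (N.toLocalized S) m s).1 =
      IsLocalizedModule.mk' (LocalizedModule.mkLinearMap S M) m.1 s := by
    rw [← IsLocalizedModule.smul_inj (LocalizedModule.mkLinearMap S M) s,
      IsLocalizedModule.mk'_cancel']
    exact congrArg Subtype.val (IsLocalizedModule.mk'_cancel' (N.toLocalized S) m s)
  ext y
  rw [Submodule.mem_localized', Submodule.mem_comap]
  constructor
  · rintro ⟨m, hm, s, rfl⟩
    exact ⟨m.1, hm, s, (hval m s).symm⟩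
  · intro hy
    obtain ⟨m, hm, s, hs⟩ := (Submodule.localized'_inf (Localization S) S
      (LocalizedModule.mkLinearMap S M) N N').ge ⟨y.2, hy⟩
    exact ⟨⟨m, hm.1⟩, hm.2, s, Subtype.ext ((hval _ _).trans hs)⟩

/-- Localization commutes with subquotients. -/
noncomputable def localizedSubquotientEquiv (N N' : Submodule R M) :
    LocalizedModule S (N ⧸ N'.comap N.subtype) ≃ₗ[Localization S]
      (N.localized S ⧸ (N'.localized S).comap (N.localized S).subtype) :=
  ((IsLocalizedModule.linearEquiv S (LocalizedModule.mkLinearMap S _)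
    ((N'.comap N.subtype).toLocalizedQuotient' (Localization S) S
      (N.toLocalized S))).extendScalarsOfIsLocalization S (Localization S)) ≪≫ₗ
    Submodule.quotEquivOfEq _ _ (localized_comap_subtype N N')

variable [IsNoetherianRing R]

theorem associatedPrimes_localizedModule :
    associatedPrimes (Localization S) (LocalizedModule S M) =
      Ideal.comap (algebraMap R (Localization S)) ⁻¹' associatedPrimes R M :=
  (Module.associatedPrimes.preimage_comap_associatedPrimes_eq_associatedPrimes_of_isLocalizedModule
    S (Localization S) (LocalizedModule.mkLinearMap S M)).symm

theorem localized_supportedPart {Z : Set (Ideal R)} (hZ : IsUpperSet Z) :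
    (supportedPart M Z).localized S = supportedPart (LocalizedModule S M)
      (Ideal.comap (algebraMap R (Localization S)) ⁻¹' Z) := by
  refine eq_supportedPart (hZ.preimage fun _ _ => Ideal.comap_mono) ?_ ?_
  · rw [LinearEquiv.AssociatedPrimes.eq (Submodule.localizedEquiv S _),
      associatedPrimes_localizedModule]
    exact Set.preimage_mono ((le_supportedPart_iff hZ).1 le_rfl)
  · rw [LinearEquiv.AssociatedPrimes.eq (localizedQuotientEquiv S _),
      associatedPrimes_localizedModule]
    exact (disjoint_associatedPrimes_quotient_supportedPart hZ).preimage _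

theorem localized_dimPart {U V : Set (WithBot ℕ∞)} (hU : IsLowerSet U) (hV : IsLowerSet V)
    (h : ∀ q ∈ associatedPrimes (Localization S) (LocalizedModule S M),
      ringKrullDim (R ⧸ q.comap (algebraMap R (Localization S))) ∈ U ↔
        ringKrullDim (Localization S ⧸ q) ∈ V) :
    (dimPart R M U).localized S = dimPart (Localization S) (LocalizedModule S M) V := by
  have hU' := isUpperSet_ringKrullDim_quotient_mem (R := R) hU
  rw [dimPart, localized_supportedPart hU']
  exact (supportedPart_eq_supportedPart_iff (hU'.preimage fun _ _ => Ideal.comap_mono)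
    (isUpperSet_ringKrullDim_quotient_mem hV)).2 h

end Submonoid

theorem nontrivial_of_mem_associatedPrimes {R M : Type*} [CommRing R] [AddCommGroup M] [Module R M]
    {p : Ideal R} (hp : p ∈ associatedPrimes R M) : Nontrivial M := by
  by_contra h
  rw [not_nontrivial_iff_subsingleton] at h
  simp [associatedPrimes.eq_empty_of_subsingleton] at hp

theorem exists_associatedPrime_le_comap {R A : Type*} [CommRing R] [CommRing A] [Algebra R A]
    [IsNoetherianRing A] {M : Type*} [AddCommGroup M] [Module A M] [Module.Finite A M]
    {I : Ideal R} (hI : ∀ x ∈ I, ¬IsSMulRegular M (algebraMap R A x)) :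
    ∃ q ∈ associatedPrimes A M, I ≤ q.comap (algebraMap R A) := by
  refine (Ideal.subset_union_prime_finite (associatedPrimes.finite A M) ⊥ ⊥
    fun q hq _ _ => hq.1.comap _).1 fun x hx => ?_
  obtain ⟨q, hq, hxq⟩ := Set.mem_iUnion₂.1
    ((biUnion_associatedPrimes_eq_compl_regular A M).superset (hI x hx))
  exact Set.mem_biUnion hq hxq

section AtPrime

variable {R : Type u} [CommRing R] {M : Type v} [AddCommGroup M] [Module R M]
  {P Q : Ideal R} [Q.IsPrime]

theorem comap_le_of_mem_associatedPrimes_localizedModule {p : Ideal (Localization.AtPrime Q)}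
    (hp : p ∈ associatedPrimes (Localization.AtPrime Q) (LocalizedModule Q.primeCompl M)) :
    p.comap (algebraMap R (Localization.AtPrime Q)) ≤ Q :=
  (Ideal.comap_mono (IsLocalRing.le_maximalIdeal hp.1.ne_top)).trans
    (Localization.AtPrime.under_maximalIdeal (I := Q)).le

variable [IsNoetherianRing R]

theorem map_mem_associatedPrimes_localizedModule {p : Ideal R} (hp : p ∈ associatedPrimes R M)
    (hpQ : p ≤ Q) : p.map (algebraMap R (Localization.AtPrime Q)) ∈
      associatedPrimes (Localization.AtPrime Q) (LocalizedModule Q.primeCompl M) := by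
  have := hp.1
  rw [associatedPrimes_localizedModule, Set.mem_preimage, ← Ideal.under_def,
    Ideal.under_map_of_isLocalizationAtPrime Q hpQ]
  exact hp

variable [Module.Finite R M]

theorem eq_of_forall_not_isSMulRegular_localizedModule (hPQ : P ≤ Q)
    (hanti : IsAntichain (· ≤ ·)
      (associatedPrimes (Localization.AtPrime Q) (LocalizedModule Q.primeCompl M)))
    (hP : ∀ x ∈ P, ¬IsSMulRegular (LocalizedModule Q.primeCompl M)
      (algebraMap R (Localization.AtPrime Q) x))
    {p : Ideal R} (hp : p ∈ associatedPrimes R M) (hpP : p ≤ P) : p = P := by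
  have := hp.1
  obtain ⟨q, hq, hPq⟩ := exists_associatedPrime_le_comap hP
  have hpq : p.map (algebraMap R (Localization.AtPrime Q)) = q :=
    hanti.eq (map_mem_associatedPrimes_localizedModule hp (hpP.trans hPQ)) hq
      (Ideal.map_le_iff_le_comap.2 (hpP.trans hPq))
  refine hpP.antisymm (hPq.trans_eq ?_)
  rw [← hpq, ← Ideal.under_def, Ideal.under_map_of_isLocalizationAtPrime Q (hpP.trans hPQ)]

variable [P.IsPrime]

theorem IsCMOfDim.exists_localization_of_forall_not_isSMulRegular (hPQ : P ≤ Q)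
    [Nontrivial (LocalizedModule P.primeCompl M)] {n : ℕ}
    (h : IsCMOfDim (Localization.AtPrime Q) (LocalizedModule Q.primeCompl M) n)
    (hP : ∀ x ∈ P, ¬IsSMulRegular (LocalizedModule Q.primeCompl M)
      (algebraMap R (Localization.AtPrime Q) x)) :
    IsCMOfDim (Localization.AtPrime P) (LocalizedModule P.primeCompl M) 0 ∧
      ringKrullDim (Localization.AtPrime Q ⧸ P.map (algebraMap R (Localization.AtPrime Q))) =
        n := by
  have comap_eq {q : Ideal (Localization.AtPrime P)}
      (hq : q ∈ associatedPrimes (Localization.AtPrime P) (LocalizedModule P.primeCompl M)) :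
      q.comap (algebraMap R (Localization.AtPrime P)) = P :=
    eq_of_forall_not_isSMulRegular_localizedModule hPQ h.isAntichain_associatedPrimes hP
      (associatedPrimes_localizedModule.subset hq)
      (comap_le_of_mem_associatedPrimes_localizedModule hq)
  refine ⟨isCMOfDim_zero fun q hq =>
    Localization.AtPrime.eq_maximalIdeal_iff_under_eq.1 (comap_eq hq), ?_⟩
  obtain ⟨q, hq⟩ := associatedPrimes.nonempty (Localization.AtPrime P)
    (LocalizedModule P.primeCompl M)
  exact h.ringKrullDim_quotient_eq (map_mem_associatedPrimes_localizedModule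
    (comap_eq hq ▸ associatedPrimes_localizedModule.subset hq) hPQ)

theorem IsCMOfDim.exists_localization (hPQ : P ≤ Q)
    [Nontrivial (LocalizedModule P.primeCompl M)] {n : ℕ}
    (h : IsCMOfDim (Localization.AtPrime Q) (LocalizedModule Q.primeCompl M) n) :
    ∃ a : ℕ, IsCMOfDim (Localization.AtPrime P) (LocalizedModule P.primeCompl M) a ∧
      (n : WithBot ℕ∞) = a +
        ringKrullDim (Localization.AtPrime Q ⧸ P.map (algebraMap R (Localization.AtPrime Q))) := by
  induction n using Nat.strong_induction_on generalizing M with | _ n ih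
  by_cases hreg : ∃ x ∈ P, IsSMulRegular (LocalizedModule Q.primeCompl M)
      (algebraMap R (Localization.AtPrime Q) x)
  · obtain ⟨x, hxP, hxQ⟩ := hreg
    have hxP' : IsSMulRegular (LocalizedModule P.primeCompl M)
        (algebraMap R (Localization.AtPrime P) x) :=
      isSMulRegular_localizedModule_iff.2 fun m hm =>
        (isSMulRegular_localizedModule_iff.1 hxQ m hm).imp fun t ht =>
          ⟨fun htP => ht.1 (hPQ htP), ht.2⟩
    have hmP := (IsLocalization.AtPrime.to_map_mem_maximal_iff (Localization.AtPrime P) P x).2 hxP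
    have hmQ := (IsLocalization.AtPrime.to_map_mem_maximal_iff (Localization.AtPrime Q) Q x).2
      (hPQ hxP)
    have := nontrivial_quotSMulTop (M := LocalizedModule P.primeCompl M) hmP
    have : Nontrivial (LocalizedModule P.primeCompl (QuotSMulTop x M)) :=
      (localizedQuotSMulTopEquiv P.primeCompl M x).toEquiv.nontrivial
    have : Small.{max u v} (Localization.AtPrime Q) := small_max.{v} _
    obtain ⟨k, rfl, hk⟩ := h.exists_quotSMulTop hmQ hxQ
    obtain ⟨a, ha, hka⟩ := ih k k.lt_succ_self (M := QuotSMulTop x M)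
      (hk.congr (localizedQuotSMulTopEquiv Q.primeCompl M x).symm)
    refine ⟨a + 1, (ha.congr (localizedQuotSMulTopEquiv P.primeCompl M x)).of_quotSMulTop
      hmP hxP', ?_⟩
    push_cast
    rw [hka, add_right_comm]
  · push Not at hreg
    obtain ⟨h0, hn⟩ := h.exists_localization_of_forall_not_isSMulRegular hPQ hreg
    exact ⟨0, h0, by rw [hn, Nat.cast_zero, zero_add]⟩

theorem IsCMModule.localization (hPQ : P ≤ Q)
    (h : IsCMModule (Localization.AtPrime Q) (LocalizedModule Q.primeCompl M)) :
    IsCMModule (Localization.AtPrime P) (LocalizedModule P.primeCompl M) := by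
  intro hP
  have hQ : Nontrivial (LocalizedModule Q.primeCompl M) :=
    Module.mem_support_iff.1 (Module.mem_support_mono (p := ⟨P, ‹_›⟩) (q := ⟨Q, ‹_›⟩) hPQ
      (Module.mem_support_iff.2 hP))
  obtain ⟨n, hn⟩ := isCMModule_iff_exists_isCMOfDim.1 h
  obtain ⟨a, ha, -⟩ := hn.exists_localization hPQ
  exact isCMModule_iff_exists_isCMOfDim.2 ⟨a, ha⟩ hP

theorem IsCMModule.ringKrullDim_quotient_map_eq_add (hPQ : P ≤ Q)
    (h : IsCMModule (Localization.AtPrime Q) (LocalizedModule Q.primeCompl M))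
    {q : Ideal R} (hq : q ∈ associatedPrimes R M) (hqP : q ≤ P) :
    ringKrullDim (Localization.AtPrime Q ⧸ q.map (algebraMap R (Localization.AtPrime Q))) =
      ringKrullDim (Localization.AtPrime P ⧸ q.map (algebraMap R (Localization.AtPrime P))) +
      ringKrullDim (Localization.AtPrime Q ⧸ P.map (algebraMap R (Localization.AtPrime Q))) := by
  have hqQ' := map_mem_associatedPrimes_localizedModule hq (hqP.trans hPQ)
  have hqP' := map_mem_associatedPrimes_localizedModule hq hqP
  have := nontrivial_of_mem_associatedPrimes hqQ'
  have := nontrivial_of_mem_associatedPrimes hqP'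
  obtain ⟨n, hn⟩ := isCMModule_iff_exists_isCMOfDim.1 h
  obtain ⟨a, ha, hna⟩ := hn.exists_localization hPQ
  rw [hn.ringKrullDim_quotient_eq hqQ', ha.ringKrullDim_quotient_eq hqP', hna]

end AtPrime

end Localization

section SequentiallyCohenMacaulay

/-- The quotient of the largest submodule of dimension at most `d` by the largest submodule of
dimension less than `d`. The nonzero ones among these modules are the quotients `D_i / D_{i-1}` of
the dimension filtration. -/
abbrev DimSubquotient (R M : Type*) [CommRing R] [AddCommGroup M] [Module R M]
    (d : WithBot ℕ∞) :=
  dimPart R M (Set.Iic d) ⧸ (dimPart R M (Set.Iio d)).comap (dimPart R M (Set.Iic d)).subtype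

theorem subsingleton_quotient_comap_subtype_self {R M : Type*} [CommRing R] [AddCommGroup M]
    [Module R M] (N : Submodule R M) : Subsingleton (N ⧸ N.comap N.subtype) := by
  rw [Submodule.comap_subtype_self]
  infer_instance

variable {R : Type*} [CommRing R] [IsNoetherianRing R] {M : Type*} [AddCommGroup M] [Module R M]
  {P Q : Ideal R} [P.IsPrime] [Q.IsPrime]

theorem isCMModule_localized_dimSubquotient_iff {k : ℕ}
    (h : ∀ q ∈ associatedPrimes (Localization.AtPrime P) (LocalizedModule P.primeCompl M),
      ringKrullDim (R ⧸ q.comap (algebraMap R (Localization.AtPrime P))) =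
        ringKrullDim (Localization.AtPrime P ⧸ q) + k) (d : WithBot ℕ∞) :
    IsCMModule (Localization.AtPrime P)
        (LocalizedModule P.primeCompl (DimSubquotient R M (d + k))) ↔
      IsCMModule (Localization.AtPrime P)
        (DimSubquotient (Localization.AtPrime P) (LocalizedModule P.primeCompl M) d) := by
  have shift_le {a b : WithBot ℕ∞} : a + k ≤ b + k ↔ a ≤ b :=
    ENat.WithBot.add_le_add_natCast_right_iff
  unfold DimSubquotient
  rw [← localized_dimPart (isLowerSet_Iic (d + k)) (isLowerSet_Iic d) fun q hq => by
      rw [h q hq, Set.mem_Iic, Set.mem_Iic, shift_le],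
    ← localized_dimPart (isLowerSet_Iio (d + k)) (isLowerSet_Iio d) fun q hq => by
      rw [h q hq, Set.mem_Iio, Set.mem_Iio, lt_iff_lt_of_le_iff_le shift_le]]
  exact ⟨fun h => h.congr (localizedSubquotientEquiv _ _),
    fun h => h.congr (localizedSubquotientEquiv _ _).symm⟩

variable [Module.Finite R M]

theorem isSeqCM_iff [IsLocalRing R] : IsSeqCM R M ↔ ∀ d, IsCMModule R (DimSubquotient R M d) :=
  exists_isDimFiltration_iff (C := fun N N' => IsCMModule R (N ⧸ N'.comap N.subtype))
    fun N _ => (not_subsingleton _ (subsingleton_quotient_comap_subtype_self N)).elim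

theorem isSeqCMGen_iff : IsSeqCMGen R M ↔ ∀ d, IsCMModuleGen R (DimSubquotient R M d) :=
  exists_isDimFiltration_iff (C := fun N N' => IsCMModuleGen R (N ⧸ N'.comap N.subtype))
    fun N P _ _ => by
      have := subsingleton_quotient_comap_subtype_self N
      exact (not_subsingleton (LocalizedModule P.primeCompl (N ⧸ N.comap N.subtype))
        inferInstance).elim

theorem IsSeqCM.isCMModule_localized_dimSubquotient (hPQ : P ≤ Q)
    (hdim : ∀ p ∈ associatedPrimes R M, p ≤ Q → ringKrullDim (R ⧸ p) =
      ringKrullDim (Localization.AtPrime Q ⧸ p.map (algebraMap R (Localization.AtPrime Q))))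
    (h : IsSeqCM (Localization.AtPrime Q) (LocalizedModule Q.primeCompl M)) (d : WithBot ℕ∞) :
    IsCMModule (Localization.AtPrime P) (LocalizedModule P.primeCompl (DimSubquotient R M d)) := by
  refine IsCMModule.localization hPQ ?_
  have hiff := isCMModule_localized_dimSubquotient_iff (P := Q) (M := M) (k := 0) (fun q hq => by
    rw [hdim _ (associatedPrimes_localizedModule.subset hq)
      (comap_le_of_mem_associatedPrimes_localizedModule hq), ← Ideal.under_def,
      IsLocalization.map_under Q.primeCompl, Nat.cast_zero, add_zero]) d
  rw [Nat.cast_zero, add_zero] at hiff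
  exact hiff.2 (isSeqCM_iff.1 h d)

theorem IsSeqCMGen.isSeqCM_localizedModule (hPQ : P ≤ Q)
    (hdim : ∀ p ∈ associatedPrimes R M, p ≤ Q → ringKrullDim (R ⧸ p) =
      ringKrullDim (Localization.AtPrime Q ⧸ p.map (algebraMap R (Localization.AtPrime Q))))
    (h : IsSeqCMGen R M) : IsSeqCM (Localization.AtPrime P) (LocalizedModule P.primeCompl M) := by
  rw [isSeqCMGen_iff] at h
  have hPQ' := Ideal.isPrime_map_of_isLocalizationAtPrime Q (S := Localization.AtPrime Q) hPQ
  obtain ⟨k, hk⟩ := exists_natCast_eq_ringKrullDim_quotient hPQ'.ne_top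
  refine isSeqCM_iff.2 fun d =>
    (isCMModule_localized_dimSubquotient_iff (k := k) (fun q hq => ?_) d).1 (h (d + k) P)
  have hp := associatedPrimes_localizedModule.subset hq
  have hpP := comap_le_of_mem_associatedPrimes_localizedModule hq
  set p := q.comap (algebraMap R (Localization.AtPrime P)) with hpq
  -- `p` is associated to the Cohen-Macaulay `R_Q`-module obtained from the subquotient of
  -- dimension `dim R/p`, so the dimension formula applies to it.
  have hpC : p ∈ associatedPrimes R (DimSubquotient R M (ringKrullDim (R ⧸ p))) :=
    mem_associatedPrimes_supportedPart_quotient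
      (isUpperSet_ringKrullDim_quotient_mem (isLowerSet_Iic _))
      (isUpperSet_ringKrullDim_quotient_mem (isLowerSet_Iio _)) hp (le_refl (ringKrullDim (R ⧸ p)))
      (lt_irrefl (ringKrullDim (R ⧸ p)))
  calc ringKrullDim (R ⧸ p)
      = ringKrullDim (Localization.AtPrime Q ⧸ p.map (algebraMap R (Localization.AtPrime Q))) :=
        hdim p hp (hpP.trans hPQ)
    _ = ringKrullDim (Localization.AtPrime P ⧸ p.map (algebraMap R (Localization.AtPrime P))) +
          ringKrullDim (Localization.AtPrime Q ⧸ P.map (algebraMap R (Localization.AtPrime Q))) :=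
        (h _ Q).ringKrullDim_quotient_map_eq_add hPQ hpC hpP
    _ = ringKrullDim (Localization.AtPrime P ⧸ q) + k := by
        rw [hk, hpq, ← Ideal.under_def, IsLocalization.map_under P.primeCompl]

end SequentiallyCohenMacaulay

/-- If `dim R/p = dim R_P/pR_P` for every `p ∈ Ass_R M` and every maximal
ideal `P ⊇ p`, then `M` is sequentially Cohen-Macaulay over `R` iff `M_P` is sequentially
Cohen-Macaulay over `R_P` for every `P ∈ Supp_R M`. -/
theorem stmt12 (R : Type*) [CommRing R] [IsNoetherianRing R]
    (M : Type*) [AddCommGroup M] [Module R M] [Module.Finite R M] [Nontrivial M]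
    (hdim : ∀ p ∈ associatedPrimes R M, ∀ P : Ideal R, ∀ hP : P.IsMaximal, p ≤ P →
      letI := hP.isPrime
      ringKrullDim (R ⧸ p) =
        ringKrullDim (Localization.AtPrime P ⧸
          p.map (algebraMap R (Localization.AtPrime P)))) :
    IsSeqCMGen R M ↔
      ∀ (P : Ideal R) (hP : P.IsPrime), ⟨P, hP⟩ ∈ Module.support R M →
        IsSeqCM (Localization.AtPrime P) (LocalizedModule P.primeCompl M) := by
  constructor
  · intro h P hP _
    obtain ⟨Q, hQ, hPQ⟩ := P.exists_le_maximal hP.ne_top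
    have := hQ.isPrime
    exact h.isSeqCM_localizedModule hPQ fun p hp => hdim p hp Q hQ
  · intro h
    refine isSeqCMGen_iff.2 fun d P hP hPd => ?_
    have hPM : ⟨P, hP⟩ ∈ Module.support R M :=
      Module.support_subset_of_injective _ (Submodule.subtype_injective _)
        (Module.support_subset_of_surjective _ (Submodule.mkQ_surjective _)
          (Module.mem_support_iff.2 hPd))
    obtain ⟨Q, hQ, hPQ⟩ := P.exists_le_maximal hP.ne_top
    have hQM := Module.mem_support_mono (q := ⟨Q, hQ.isPrime⟩) hPQ hPM
    exact (h Q hQ.isPrime hQM).isCMModule_localized_dimSubquotient hPQ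
      (fun p hp => hdim p hp Q hQ) d hPd
end
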